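/- arXiv:1707.03639 — 5 statements merged into one kernel-verified Lean document; each statement's English description precedes it below -/
import Mathlib

section
/- For every finite group G, d(G) + |G| ≤ E(G) ≤ 2|G| − 1, where d(G) is the maximal length of a product-one free sequence over G and E(G) is the smallest l such that every sequence over G of length at least l has a product-one subsequence of length exactly |G|. -/
/-- A sequence (multiset) over `G` is product-one if its terms can be ordered so
that their product equals `1`. -/
def IsProductOne {G : Type*} [Group G] (S : Multiset G) : Prop :=
  ∃ l : List G, (l : Multiset G) = S ∧ l.prod = 1

/-- A sequence is product-one free if it has no nonempty product-one subsequence. -/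
def ProductOneFree {G : Type*} [Group G] (S : Multiset G) : Prop :=
  ∀ T ≤ S, T ≠ 0 → ¬ IsProductOne T

open scoped Pointwise in
/-- Kemperman-Scherk: sets with a unique representation of `1`. -/
theorem kemperman_scherk {G : Type*} [Group G] [Fintype G] [DecidableEq G] :
    ∀ (N M : ℕ) (A B : Finset G), 2 * Fintype.card G - (A.card + B.card) ≤ N → B.card ≤ M →
      1 ∈ A → 1 ∈ B → (∀ a ∈ A, ∀ b ∈ B, a * b = 1 → a = 1) →
      A.card + B.card ≤ (A * B).card + 1 := by
  intro N
  induction N using Nat.strong_induction_on with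
  | _ N ihN =>
  intro M
  induction M using Nat.strong_induction_on with
  | _ M ihM =>
  intro A B hN hM hA hB hu
  by_cases hAB : ∃ g ∈ A, g ∈ B ∧ g ≠ 1
  · obtain ⟨g, hgA, hgB, hg1⟩ := hAB
    have hgB' : g⁻¹ ∉ B := fun h => hg1 (hu g hgA _ h (by simp))
    have hgA' : g⁻¹ ∉ A := fun h => hg1 (by simpa using hu _ h g hgB (by simp))
    -- the two transforms
    have key1 : (A ∪ A.image (· * g)).card + (A ∩ A.image (· * g)).card = A.card + A.card := by
      rw [Finset.card_union_add_card_inter,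
        Finset.card_image_of_injective _ (mul_left_injective g)]
    have key2 : (B ∪ B.image (g * ·)).card + (B ∩ B.image (g * ·)).card = B.card + B.card := by
      rw [Finset.card_union_add_card_inter,
        Finset.card_image_of_injective _ (mul_right_injective g)]
    have e1 : (A.filter (fun a => a * g ∈ A)).card = (A ∩ A.image (· * g)).card := by
      rw [← Finset.card_image_of_injective _ (mul_left_injective g)]
      congr 1
      ext x
      simp only [Finset.mem_image, Finset.mem_filter, Finset.mem_inter]
      constructor
      · rintro ⟨a, ⟨h1, h2⟩, rfl⟩
        exact ⟨h2, a, h1, rfl⟩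
      · rintro ⟨h1, a, h2, rfl⟩
        exact ⟨a, ⟨h2, h1⟩, rfl⟩
    have e2 : (B.filter (fun b => g * b ∈ B)).card = (B ∩ B.image (g * ·)).card := by
      rw [← Finset.card_image_of_injective _ (mul_right_injective g)]
      congr 1
      ext x
      simp only [Finset.mem_image, Finset.mem_filter, Finset.mem_inter]
      constructor
      · rintro ⟨a, ⟨h1, h2⟩, rfl⟩
        exact ⟨h2, a, h1, rfl⟩
      · rintro ⟨h1, a, h2, rfl⟩
        exact ⟨a, ⟨h2, h1⟩, rfl⟩
    have bA := fun X : Finset G => Finset.card_le_univ X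
    by_cases hc : A.card + B.card ≤
        (A ∪ A.image (· * g)).card + (B.filter (fun b => g * b ∈ B)).card
    · have hlt : (B.filter (fun b => g * b ∈ B)).card < B.card := by
        apply Finset.card_lt_card
        refine ⟨Finset.filter_subset _ _, fun h => ?_⟩
        have himg : B.image (g * ·) = B := by
          apply Finset.eq_of_subset_of_card_le
          · intro x hx
            obtain ⟨b, hb, rfl⟩ := Finset.mem_image.1 hx
            exact (Finset.mem_filter.1 (h hb)).2
          · rw [Finset.card_image_of_injective _ (mul_right_injective g)]
        rw [← himg] at hB
        obtain ⟨b, hb, hb1⟩ := Finset.mem_image.1 hB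
        exact hgB' (by rw [← eq_inv_of_mul_eq_one_right hb1]; exact hb)
      have := ihM _ (lt_of_lt_of_le hlt hM) (A ∪ A.image (· * g))
        (B.filter (fun b => g * b ∈ B)) (by omega) le_rfl
        (Finset.mem_union_left _ hA) (by simp [hB, hgB]) (by
          intro a ha b hb hab
          obtain ⟨hb1, hb2⟩ := Finset.mem_filter.1 hb
          rcases Finset.mem_union.1 ha with ha | ha
          · exact hu a ha b hb1 hab
          · obtain ⟨a', ha', rfl⟩ := Finset.mem_image.1 ha
            have h1 := hu a' ha' _ hb2 (by rw [← mul_assoc]; exact hab)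
            subst h1
            simp only [one_mul] at hab
            exact absurd (by rw [← eq_inv_of_mul_eq_one_right hab]; exact hb1) hgB')
      have hsub : (A ∪ A.image (· * g)) * (B.filter (fun b => g * b ∈ B)) ⊆ A * B := by
        intro x hx
        obtain ⟨a, ha, b, hb, rfl⟩ := Finset.mem_mul.1 hx
        obtain ⟨hb1, hb2⟩ := Finset.mem_filter.1 hb
        rcases Finset.mem_union.1 ha with ha | ha
        · exact Finset.mul_mem_mul ha hb1
        · obtain ⟨a', ha', rfl⟩ := Finset.mem_image.1 ha
          rw [mul_assoc]
          exact Finset.mul_mem_mul ha' hb2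
      have := Finset.card_le_card hsub
      omega
    · have b1 := bA A
      have b2 := bA B
      have b3 := bA (A.filter (fun a => a * g ∈ A))
      have b4 := bA (B ∪ B.image (g * ·))
      have := ihN (2 * Fintype.card G - ((A.filter (fun a => a * g ∈ A)).card +
          (B ∪ B.image (g * ·)).card)) (by omega) _ (A.filter (fun a => a * g ∈ A))
        (B ∪ B.image (g * ·)) le_rfl le_rfl
        (by simp [hA, hgA]) (Finset.mem_union_left _ hB) (by
          intro a ha b hb hab
          obtain ⟨ha1, ha2⟩ := Finset.mem_filter.1 ha
          rcases Finset.mem_union.1 hb with hb | hb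
          · exact hu a ha1 b hb hab
          · obtain ⟨b', hb', rfl⟩ := Finset.mem_image.1 hb
            have h1 := hu _ ha2 _ hb' (by rw [mul_assoc]; exact hab)
            exact absurd (by rw [← eq_inv_of_mul_eq_one_left h1]; exact ha1) hgA')
      have hsub : (A.filter (fun a => a * g ∈ A)) * (B ∪ B.image (g * ·)) ⊆ A * B := by
        intro x hx
        obtain ⟨a, ha, b, hb, rfl⟩ := Finset.mem_mul.1 hx
        obtain ⟨ha1, ha2⟩ := Finset.mem_filter.1 ha
        rcases Finset.mem_union.1 hb with hb | hb
        · exact Finset.mul_mem_mul ha1 hb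
        · obtain ⟨b', hb', rfl⟩ := Finset.mem_image.1 hb
          rw [← mul_assoc]
          exact Finset.mul_mem_mul ha2 hb'
      have := Finset.card_le_card hsub
      omega
  · push Not at hAB
    have h1 : A ∩ B ⊆ {1} := by
      intro x hx
      rw [Finset.mem_inter] at hx
      simpa using hAB x hx.1 hx.2
    have h2 : A ∪ B ⊆ A * B := by
      apply Finset.union_subset
      · exact Finset.subset_mul_left _ hB
      · exact Finset.subset_mul_right _ hA
    have h3 := Finset.card_le_card h1
    have h4 := Finset.card_le_card h2
    have h5 := Finset.card_union_add_card_inter A B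
    simp only [Finset.card_singleton] at h3
    omega

open scoped Pointwise in
/-- Slots with a base element and further options: either `1` has a nontrivial representation,
or there are many different products. -/
theorem slots_lemma {G : Type*} [Group G] [Fintype G] [DecidableEq G]
    (l : List (G × Finset G)) (hl : ∀ p ∈ l, p.1 ∉ p.2) :
    (∃ y : List G, List.Forall₂ (fun p x => x = p.1 ∨ x ∈ p.2) l y ∧ y ≠ l.map Prod.fst ∧
      y.prod = (l.map Prod.fst).prod) ∨
    ∃ X : Finset G, 1 ∈ X ∧ (l.map (fun p => p.2.card)).sum + 1 ≤ X.card ∧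
      ∀ x ∈ X, ∃ y : List G, List.Forall₂ (fun p x => x = p.1 ∨ x ∈ p.2) l y ∧
        y.prod = x * (l.map Prod.fst).prod := by
  induction l with
  | nil => exact Or.inr ⟨{1}, by simp, by simp, by simp⟩
  | cons p l ih =>
    obtain ⟨c, D⟩ := p
    have hc : c ∉ D := hl (c, D) (by simp)
    rcases ih (fun p hp => hl p (by simp [hp])) with ⟨y, hy1, hy2, hy3⟩ | ⟨X, hX1, hX2, hX3⟩
    · refine Or.inl ⟨c :: y, List.Forall₂.cons (Or.inl rfl) hy1, ?_, ?_⟩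
      · simpa using hy2
      · simp [hy3]
    · by_cases hnt : ∃ y : List G,
          List.Forall₂ (fun p x => x = p.1 ∨ x ∈ p.2) ((c, D) :: l) y ∧
          y ≠ ((c, D) :: l).map Prod.fst ∧ y.prod = (((c, D) :: l).map Prod.fst).prod
      · exact Or.inl hnt
      right
      set A : Finset G := (insert c D).image (· * c⁻¹) with hA
      set B : Finset G := X.image (fun x => c * x * c⁻¹) with hB
      have cA : A.card = D.card + 1 := by
        rw [hA, Finset.card_image_of_injective _ (mul_left_injective _),
          Finset.card_insert_of_notMem hc]
      have cB : B.card = X.card := by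
        rw [hB]
        apply Finset.card_image_of_injective
        intro a b hab
        simpa using hab
      have hrep : ∀ d ∈ insert c D, ∀ x ∈ X, ∃ y : List G,
          List.Forall₂ (fun p x => x = p.1 ∨ x ∈ p.2) ((c, D) :: l) (d :: y) ∧
          (d :: y).prod = d * c⁻¹ * (c * x * c⁻¹) * (((c, D) :: l).map Prod.fst).prod := by
        intro d hd x hx
        obtain ⟨y, hy1, hy2⟩ := hX3 x hx
        refine ⟨y, List.Forall₂.cons (by simpa using hd) hy1, ?_⟩
        simp [hy2, mul_assoc]
      have hks := kemperman_scherk _ _ A B le_rfl le_rfl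
        (by rw [hA]; exact Finset.mem_image.2 ⟨c, by simp, by simp⟩)
        (by rw [hB]; exact Finset.mem_image.2 ⟨1, hX1, by simp⟩)
        (by
          intro a ha b hb hab
          obtain ⟨d, hd, rfl⟩ := Finset.mem_image.1 ha
          obtain ⟨x, hx, rfl⟩ := Finset.mem_image.1 hb
          obtain ⟨y, hy1, hy2⟩ := hrep d hd x hx
          by_contra hne
          apply hnt
          refine ⟨d :: y, hy1, ?_, ?_⟩
          · intro h
            simp only [List.map_cons, List.cons.injEq] at h
            exact hne (by simp [h.1])
          · rw [hy2, hab, one_mul])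
      refine ⟨A * B, ?_, ?_, ?_⟩
      · rw [← one_mul (1 : G)]
        exact Finset.mul_mem_mul
          (by rw [hA]; exact Finset.mem_image.2 ⟨c, by simp, by simp⟩)
          (by rw [hB]; exact Finset.mem_image.2 ⟨1, hX1, by simp⟩)
      · simp only [List.map_cons, List.sum_cons]
        omega
      · intro x hx
        obtain ⟨a, ha, b, hb, rfl⟩ := Finset.mem_mul.1 hx
        obtain ⟨d, hd, rfl⟩ := Finset.mem_image.1 ha
        obtain ⟨x', hx', rfl⟩ := Finset.mem_image.1 hb
        obtain ⟨y, hy1, hy2⟩ := hrep d hd x' hx'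
        exact ⟨_, hy1, hy2⟩

/-- Attach the option sets `D i, D (i+1), …` to the occurrences of `g` in a word. -/
def attachOptions {G : Type*} [DecidableEq G] (g : G) (D : ℕ → Finset G) :
    ℕ → List G → List (G × Finset G)
  | _, [] => []
  | i, x :: w => if x = g then (g, D i) :: attachOptions g D (i + 1) w
      else (x, ∅) :: attachOptions g D i w

theorem attach_fst {G : Type*} [DecidableEq G] (g : G) (D : ℕ → Finset G) (w : List G) :
    ∀ i, (attachOptions g D i w).map Prod.fst = w := by
  induction w with
  | nil => intro i; rfl
  | cons x w ih =>
    intro i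
    by_cases hx : x = g <;> simp [attachOptions, hx, ih]

theorem attach_not_mem {G : Type*} [DecidableEq G] (g : G) (D : ℕ → Finset G)
    (hD : ∀ i, g ∉ D i) (w : List G) :
    ∀ i, ∀ p ∈ attachOptions g D i w, p.1 ∉ p.2 := by
  induction w with
  | nil => intro i p hp; simp [attachOptions] at hp
  | cons x w ih =>
    intro i p hp
    by_cases hx : x = g
    · simp only [attachOptions, hx, if_true, List.mem_cons] at hp
      rcases hp with rfl | hp
      · exact hD i
      · exact ih _ p hp
    · simp only [attachOptions, hx, if_false, List.mem_cons] at hp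
      rcases hp with rfl | hp
      · simp
      · exact ih _ p hp

theorem attach_sum {G : Type*} [DecidableEq G] (g : G) (D : ℕ → Finset G) (w : List G) :
    ∀ i, ((attachOptions g D i w).map (fun p => p.2.card)).sum =
      ∑ j ∈ Finset.range (w.count g), (D (i + j)).card := by
  induction w with
  | nil => intro i; simp [attachOptions]
  | cons x w ih =>
    intro i
    by_cases hx : x = g
    · subst hx
      simp only [attachOptions, if_true, List.map_cons, List.sum_cons, ih, List.count_cons_self]
      rw [Finset.sum_range_succ']
      rw [add_comm]
      congr 1
      apply Finset.sum_congr rfl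
      intro j _
      rw [show i + 1 + j = i + (j + 1) by ring]
    · simp [attachOptions, hx, ih]

theorem attach_choice {G : Type*} [DecidableEq G] (g : G) (D : ℕ → Finset G)
    (hD : ∀ i, g ∉ D i) (w : List G) :
    ∀ i y, List.Forall₂ (fun p x => x = p.1 ∨ x ∈ p.2) (attachOptions g D i w) y →
      y.length = w.length ∧ y.count g ≤ w.count g ∧ (y.count g = w.count g → y = w) ∧
      ∀ z, z ≠ g → y.count z ≤ w.count z +
        ∑ j ∈ Finset.range (w.count g), (if z ∈ D (i + j) then 1 else 0) := by
  induction w with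
  | nil =>
    intro i y hy
    simp only [attachOptions, List.forall₂_nil_left_iff] at hy
    subst hy
    simp
  | cons x w ih =>
    intro i y hy
    by_cases hx : x = g
    · subst hx
      simp only [attachOptions, if_true] at hy
      obtain ⟨b, y', hb, hy', rfl⟩ := List.forall₂_cons_left_iff.1 hy
      obtain ⟨h1, h2, h3, h4⟩ := ih _ _ hy'
      have hsum : ∀ z, ∑ j ∈ Finset.range (w.count x + 1), (if z ∈ D (i + j) then 1 else 0) =
          (∑ j ∈ Finset.range (w.count x), (if z ∈ D (i + 1 + j) then 1 else 0)) +
            (if z ∈ D i then 1 else 0) := by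
        intro z
        rw [Finset.sum_range_succ']
        simp only [add_zero]
        congr 1
        apply Finset.sum_congr rfl
        intro j _
        rw [show i + 1 + j = i + (j + 1) by ring]
      simp only at hb
      rcases hb with rfl | hb
      · refine ⟨by simp [h1], by simpa using h2, by simpa using h3, ?_⟩
        intro z hz
        have := h4 z hz
        rw [List.count_cons_self, hsum, List.count_cons_of_ne hz.symm,
          List.count_cons_of_ne hz.symm]
        omega
      · have hbx : b ≠ x := fun h => hD i (h ▸ hb)
        refine ⟨by simp [h1], ?_, ?_, ?_⟩
        · rw [List.count_cons_self, List.count_cons_of_ne hbx]; omega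
        · rw [List.count_cons_self, List.count_cons_of_ne hbx]; omega
        · intro z hz
          have := h4 z hz
          rw [List.count_cons_self, hsum, List.count_cons_of_ne hz.symm]
          by_cases hbz : b = z
          · subst hbz
            rw [List.count_cons_self, if_pos hb]
            omega
          · rw [List.count_cons_of_ne hbz]
            omega
    · simp only [attachOptions, hx, if_false] at hy
      obtain ⟨b, y', hb, hy', rfl⟩ := List.forall₂_cons_left_iff.1 hy
      obtain ⟨h1, h2, h3, h4⟩ := ih _ _ hy'
      simp only [Finset.notMem_empty, or_false] at hb
      subst hb
      refine ⟨by simp [h1], ?_, ?_, ?_⟩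
      · rw [List.count_cons_of_ne hx, List.count_cons_of_ne hx]; exact h2
      · rw [List.count_cons_of_ne hx, List.count_cons_of_ne hx]
        intro h; rw [h3 h]
      · intro z hz
        have := h4 z hz
        rw [List.count_cons_of_ne hx]
        by_cases hbz : b = z
        · subst hbz
          rw [List.count_cons_self, List.count_cons_self]
          omega
        · rw [List.count_cons_of_ne hbz, List.count_cons_of_ne hbz]
          exact this

/-- Olson's theorem. -/
theorem olson {G : Type*} [Group G] [Fintype G] (S : Multiset G)
    (hS : 2 * Fintype.card G - 1 ≤ Multiset.card S) :
    ∃ T ≤ S, Multiset.card T = Fintype.card G ∧ IsProductOne T := by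
  classical
  obtain ⟨g, -, hg⟩ := Finset.exists_max_image (Finset.univ : Finset G) (fun x => S.count x)
    ⟨1, Finset.mem_univ _⟩
  have hn : 0 < Fintype.card G := Fintype.card_pos
  -- induction on the number of occurrences of g
  have main : ∀ (f : ℕ) (w : List G), w.count g ≤ f → w.length = Fintype.card G → w.prod = 1 →
      (∀ z, z ≠ g → w.count z ≤ S.count z) →
      ∃ T ≤ S, Multiset.card T = Fintype.card G ∧ IsProductOne T := by
    intro f
    induction f with
    | zero =>
      intro w h1 h2 h3 h4
      refine ⟨w, ?_, by simpa using h2, w, rfl, h3⟩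
      rw [Multiset.le_iff_count]
      intro z
      rw [Multiset.coe_count]
      by_cases hz : z = g
      · subst hz; omega
      · exact h4 z hz
    | succ f ih =>
      intro w h1 h2 h3 h4
      by_cases hf : w.count g ≤ S.count g
      · refine ⟨w, ?_, by simpa using h2, w, rfl, h3⟩
        rw [Multiset.le_iff_count]
        intro z
        rw [Multiset.coe_count]
        by_cases hz : z = g
        · subst hz; exact hf
        · exact h4 z hz
      push Not at hf
      set D : ℕ → Finset G := fun j =>
        Finset.univ.filter (fun z => z ≠ g ∧ j < S.count z - w.count z) with hDdef
      have hD : ∀ i, g ∉ D i := by intro i; simp [hDdef]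
      -- counting
      have hcol : ∀ z, z ≠ g → ∑ j ∈ Finset.range (w.count g), (if z ∈ D (0 + j) then 1 else 0) =
          S.count z - w.count z := by
        intro z hz
        rw [← Finset.card_filter]
        have : (Finset.range (w.count g)).filter (fun j => z ∈ D (0 + j)) =
            Finset.range (S.count z - w.count z) := by
          ext j
          have := hg z (Finset.mem_univ _)
          simp only [hDdef, Finset.mem_filter, Finset.mem_range, Finset.mem_univ, true_and,
            zero_add]
          constructor
          · rintro ⟨_, _, h⟩; exact h
          · intro h; exact ⟨by omega, hz, h⟩
        rw [this, Finset.card_range]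
      have hsumD : ∑ j ∈ Finset.range (w.count g), (D (0 + j)).card =
          ∑ z ∈ Finset.univ.erase g, (S.count z - w.count z) := by
        have : ∀ j, (D (0 + j)).card =
            ∑ z ∈ Finset.univ.erase g, (if z ∈ D (0 + j) then 1 else 0) := by
          intro j
          rw [← Finset.card_filter]
          congr 1
          ext z
          simp only [Finset.mem_filter, Finset.mem_erase, Finset.mem_univ, and_true]
          constructor
          · intro h; exact ⟨fun hz => hD _ (hz ▸ h), h⟩
          · exact fun h => h.2
        rw [Finset.sum_congr rfl (fun j _ => this j), Finset.sum_comm]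
        apply Finset.sum_congr rfl
        intro z hz
        exact hcol z (Finset.ne_of_mem_erase hz)
      have hcS : S.count g + ∑ z ∈ Finset.univ.erase g, S.count z = Multiset.card S := by
        rw [Finset.add_sum_erase _ (fun z => S.count z) (Finset.mem_univ g)]
        exact Multiset.sum_count_eq_card (fun _ _ => Finset.mem_univ _)
      have hcw : w.count g + ∑ z ∈ Finset.univ.erase g, w.count z = Fintype.card G := by
        rw [Finset.add_sum_erase _ (fun z => w.count z) (Finset.mem_univ g), ← h2]
        have := Multiset.sum_count_eq_card (s := Finset.univ) (m := (w : Multiset G))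
          (fun _ _ => Finset.mem_univ _)
        simpa only [Multiset.coe_count, Multiset.coe_card] using this
      have hsub : ∑ z ∈ Finset.univ.erase g, (S.count z - w.count z) +
          ∑ z ∈ Finset.univ.erase g, w.count z = ∑ z ∈ Finset.univ.erase g, S.count z := by
        rw [← Finset.sum_add_distrib]
        apply Finset.sum_congr rfl
        intro z hz
        exact Nat.sub_add_cancel (h4 z (Finset.ne_of_mem_erase hz))
      rcases slots_lemma (attachOptions g D 0 w) (attach_not_mem g D hD w 0) with
        ⟨y, hy1, hy2, hy3⟩ | ⟨X, -, hX, -⟩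
      · rw [attach_fst] at hy2 hy3
        obtain ⟨k1, k2, k3, k4⟩ := attach_choice g D hD w 0 y hy1
        refine ih y ?_ (by omega) (by rw [hy3, h3]) ?_
        · have : y.count g ≠ w.count g := fun h => hy2 (k3 h)
          omega
        · intro z hz
          have a1 := k4 z hz
          rw [hcol z hz] at a1
          have a2 := h4 z hz
          omega
      · rw [attach_sum, hsumD] at hX
        have := Finset.card_le_univ X
        omega
  refine main _ (List.replicate (Fintype.card G) g) le_rfl (by simp) (by simp) ?_
  intro z hz
  rw [List.count_replicate]
  simp [hz.symm]

/-- For every finite group `G`, `d(G) + |G| ≤ E(G) ≤ 2|G| − 1`. -/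
theorem davenport_add_card_le_E_le {G : Type*} [Group G] [Fintype G] (d E : ℕ)
    (hd : IsGreatest {k : ℕ | ∃ S : Multiset G, Multiset.card S = k ∧ ProductOneFree S} d)
    (hE : IsLeast {l : ℕ | ∀ S : Multiset G, l ≤ Multiset.card S →
      ∃ T ≤ S, Multiset.card T = Fintype.card G ∧ IsProductOne T} E) :
    d + Fintype.card G ≤ E ∧ E ≤ 2 * Fintype.card G - 1 := by
  classical
  refine ⟨?_, hE.2 (fun S hS => olson S hS)⟩
  by_contra hlt
  push Not at hlt
  have hn : 0 < Fintype.card G := Fintype.card_pos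
  obtain ⟨⟨S, hSd, hS⟩, -⟩ := hd
  obtain ⟨T, hT, hTc, l, hl, hl1⟩ := hE.1 (S + Multiset.replicate (Fintype.card G - 1) 1)
    (by rw [Multiset.card_add, Multiset.card_replicate]; omega)
  have hprod : ∀ l : List G, (l.filter (fun x => x ≠ 1)).prod = l.prod := by
    intro l
    induction l with
    | nil => simp
    | cons a l ih =>
      by_cases ha : a = 1
      · simpa [ha] using ih
      · simpa [ha] using ih
  have hSone : S.count 1 = 0 := by
    rw [Multiset.count_eq_zero]
    intro h
    exact hS {1} (by simpa using h) (by simp) ⟨[1], by simp, by simp⟩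
  refine hS (T.filter (fun x => x ≠ 1)) ?_ ?_ ⟨l.filter (fun x => x ≠ 1), ?_, ?_⟩
  · rw [Multiset.le_iff_count]
    intro z
    have h1 := Multiset.le_iff_count.1 hT z
    rw [Multiset.count_add, Multiset.count_replicate] at h1
    rw [Multiset.count_filter]
    by_cases hz : z = 1
    · simp [hz]
    · rw [if_neg (fun h => hz h.symm)] at h1
      rw [if_pos hz]
      omega
  · intro h0
    have h1 := Multiset.le_iff_count.1 hT 1
    rw [Multiset.count_add, Multiset.count_replicate_self, hSone] at h1
    have h2 : T.count 1 = Multiset.card T := by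
      rw [Multiset.count_eq_card]
      intro x hx
      by_contra hne
      have : x ∈ T.filter (fun x => x ≠ 1) := Multiset.mem_filter.2 ⟨hx, fun h => hne h.symm⟩
      rw [h0] at this
      simp at this
    omega
  · rw [← hl, Multiset.filter_coe]
  · rw [hprod, hl1]
end

section
/- Let G ≅ C_m ⋉_φ C_m. Then every sequence S over G of length |S| = 3m − 2 contains a nonempty product-one subsequence T of length |T| ∈ [1, m]. -/
/-- Davenport constant bound for elementary abelian groups, by Chevalley-Warning. -/
lemma dav {ι : Type*} (p : ℕ) [Fact p.Prime] (k : ℕ) (a : Fin k → ι → ZMod p) (s : Finset ι)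
    (hs : k * (p - 1) < s.card) :
    ∃ t ⊆ s, t.Nonempty ∧ ∀ j, ∑ i ∈ t, a j i = 0 := by
  classical
  have hp : p.Prime := Fact.out
  have hp2 := hp.two_le
  let F : Fin k → MvPolynomial s (ZMod p) := fun j =>
    ∑ i : s, MvPolynomial.C (a j i) * MvPolynomial.X i ^ (p - 1)
  have hdeg : ∀ j, (F j).totalDegree ≤ p - 1 := by
    intro j
    refine MvPolynomial.totalDegree_finsetSum_le ?_
    intro i _
    refine (MvPolynomial.totalDegree_mul _ _).trans ?_
    rw [MvPolynomial.totalDegree_C, MvPolynomial.totalDegree_X_pow]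
    omega
  have hlt : (∑ j ∈ Finset.univ, (F j).totalDegree) < Fintype.card s := by
    calc (∑ j ∈ Finset.univ, (F j).totalDegree) ≤ ∑ j : Fin k, (p - 1) :=
          Finset.sum_le_sum fun j _ => hdeg j
      _ = k * (p - 1) := by simp
      _ < _ := by simpa using hs
  have hdvd := char_dvd_card_solutions_of_sum_lt p (K := ZMod p) (f := F) (s := Finset.univ) hlt
  have h0 : ∀ j ∈ (Finset.univ : Finset (Fin k)), MvPolynomial.eval (0 : s → ZMod p) (F j) = 0 := by
    intro j _
    simp only [F, map_sum, map_mul, map_pow, MvPolynomial.eval_X, Pi.zero_apply]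
    refine Finset.sum_eq_zero fun i _ => ?_
    rw [zero_pow (by omega), mul_zero]
  have hone : 1 < Fintype.card {x : s → ZMod p // ∀ j ∈ (Finset.univ : Finset (Fin k)),
      MvPolynomial.eval x (F j) = 0} := by
    have : 0 < Fintype.card {x : s → ZMod p // ∀ j ∈ (Finset.univ : Finset (Fin k)),
      MvPolynomial.eval x (F j) = 0} := Fintype.card_pos_iff.2 ⟨⟨0, h0⟩⟩
    have := Nat.le_of_dvd this (by convert hdvd)
    omega
  obtain ⟨⟨x, hx⟩, hne⟩ := Fintype.exists_ne_of_one_lt_card hone ⟨0, h0⟩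
  have hx0 : x ≠ 0 := fun h => hne (by simp [h])
  obtain ⟨i0, hi0⟩ := Function.ne_iff.1 hx0
  refine ⟨(Finset.univ.filter fun i : s => x i ≠ 0).map (Function.Embedding.subtype _), ?_, ?_, ?_⟩
  · intro i hi
    simp only [Finset.mem_map] at hi
    obtain ⟨y, -, rfl⟩ := hi
    exact y.2
  · exact ⟨i0, Finset.mem_map.2 ⟨i0, by simpa using hi0, rfl⟩⟩
  · intro j
    rw [Finset.sum_map, Finset.sum_filter]
    have := hx j (Finset.mem_univ _)
    simp only [F, map_sum, map_mul, map_pow, MvPolynomial.eval_X, MvPolynomial.eval_C] at this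
    refine Eq.trans ?_ this
    refine Finset.sum_congr rfl fun i _ => ?_
    by_cases h : x i = 0
    · simp [h, zero_pow (show p - 1 ≠ 0 by omega)]
    · simp [h, ZMod.pow_card_sub_one_eq_one h]

lemma eta_finset {ι : Type*} (p : ℕ) [Fact p.Prime] (f g : ι → ZMod p) (s : Finset ι)
    (hs : 3 * p - 2 ≤ s.card) :
    ∃ t ⊆ s, t.Nonempty ∧ t.card ≤ p ∧ ∑ i ∈ t, f i = 0 ∧ ∑ i ∈ t, g i = 0 := by
  classical
  have hp : p.Prime := Fact.out
  have hp2 := hp.two_le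
  obtain ⟨s', hs', hc⟩ := Finset.exists_subset_card_eq hs
  obtain ⟨t, hts, htn, ht⟩ := dav p 3 ![f, g, fun _ => 1] s' (by omega)
  have h1 := ht 0
  have h2 := ht 1
  have h3 := ht 2
  simp at h1 h2 h3
  rw [ZMod.natCast_eq_zero_iff] at h3
  obtain ⟨c, hcc⟩ := h3
  have hle := Finset.card_le_card hts
  have hpos := htn.card_pos
  have hc3 : c < 3 := by
    by_contra h
    have : p * 3 ≤ p * c := Nat.mul_le_mul_left _ (by omega)
    omega
  have hts' := hts.trans hs'
  interval_cases c
  · omega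
  · exact ⟨t, hts', htn, by omega, h1, h2⟩
  · obtain ⟨i, hi⟩ := htn
    obtain ⟨r, hr, hrn, hr0⟩ := dav p 2 ![f, g] (t.erase i) (by
      rw [Finset.card_erase_of_mem hi]; omega)
    have k1 := hr0 0
    have k2 := hr0 1
    simp at k1 k2
    have hrt : r ⊆ t := hr.trans (Finset.erase_subset _ _)
    by_cases hrc : r.card ≤ p
    · exact ⟨r, hrt.trans hts', hrn, hrc, k1, k2⟩
    · refine ⟨t \ r, Finset.sdiff_subset.trans hts', ⟨i, ?_⟩, ?_, ?_, ?_⟩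
      · refine Finset.mem_sdiff.2 ⟨hi, fun h => ?_⟩
        simpa using hr h
      · rw [Finset.card_sdiff_of_subset hrt]; omega
      · have := Finset.sum_sdiff (f := f) hrt
        rw [h1, k1] at this; simpa using this
      · have := Finset.sum_sdiff (f := g) hrt
        rw [h2, k2] at this; simpa using this

lemma eta_multiset {G : Type*} (p : ℕ) [Fact p.Prime] (f g : G → ZMod p) (S : Multiset G)
    (hs : 3 * p - 2 ≤ S.card) :
    ∃ T ≤ S, T ≠ 0 ∧ T.card ≤ p ∧ (T.map f).sum = 0 ∧ (T.map g).sum = 0 := by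
  classical
  obtain ⟨l, rfl⟩ : ∃ l : List G, (l : Multiset G) = S := ⟨S.toList, by simp⟩
  have hl : (Finset.univ : Finset (Fin l.length)).val.map l.get = (l : Multiset G) := by
    simp
  obtain ⟨t, -, htn, htc, h1, h2⟩ := eta_finset p (fun i => f (l.get i)) (fun i => g (l.get i))
    (Finset.univ : Finset (Fin l.length)) (by simpa using hs)
  refine ⟨t.val.map l.get, ?_, ?_, ?_, ?_, ?_⟩
  · rw [← hl]
    exact Multiset.map_le_map (Finset.val_le_iff.2 (Finset.subset_univ t))
  · intro h
    have := congrArg Multiset.card h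
    simp at this
    exact htn.ne_empty this
  · simpa using htc
  · rw [Multiset.map_map]; exact h1
  · rw [Multiset.map_map]; exact h2

lemma blocks {G : Type*} (p : ℕ) [Fact p.Prime] (f g : G → ZMod p) (k : ℕ) :
    ∀ S : Multiset G, 3 * p - 2 + k * p ≤ S.card + p →
    ∃ L : List (List G), L.length = k ∧ ((L.flatten : List G) : Multiset G) ≤ S ∧
      ∀ l ∈ L, l ≠ [] ∧ l.length ≤ p ∧ (l.map f).sum = 0 ∧ (l.map g).sum = 0 := by
  classical
  induction k with
  | zero => intro S _; exact ⟨[], by simp⟩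
  | succ k ih =>
    intro S hS
    rw [show (k + 1) * p = k * p + p from Nat.succ_mul k p] at hS
    obtain ⟨T, hT, hT0, hTc, h1, h2⟩ := eta_multiset p f g S (by omega)
    have hc := Multiset.card_sub hT
    have hcl := Multiset.card_le_card hT
    obtain ⟨L, hL, hLS, hLp⟩ := ih (S - T) (by omega)
    refine ⟨T.toList :: L, by simp [hL], ?_, ?_⟩
    · rw [List.flatten_cons, ← Multiset.coe_add, Multiset.coe_toList]
      calc T + _ ≤ T + (S - T) := by gcongr
        _ = S := by rw [add_comm]; exact tsub_add_cancel_of_le hT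
    · intro l hl
      rcases List.mem_cons.1 hl with rfl | hl
      · refine ⟨by simpa using hT0, by simpa using hTc, ?_, ?_⟩
        · rw [← Multiset.sum_coe, ← Multiset.map_coe, Multiset.coe_toList, h1]
        · rw [← Multiset.sum_coe, ← Multiset.map_coe, Multiset.coe_toList, h2]
      · exact hLp l hl

lemma perm_lift {α β : Type*} (f : α → β) {l l' : List β} (h : l.Perm l') :
    ∀ L' : List α, L'.map f = l' → ∃ L : List α, L.Perm L' ∧ L.map f = l := by
  induction h with
  | nil => intro L' h; exact ⟨L', List.Perm.refl _, h⟩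
  | cons x _ ih =>
    intro L' h
    cases L' with
    | nil => simp at h
    | cons a L' =>
      simp at h
      obtain ⟨L, hL, hm⟩ := ih L' h.2
      exact ⟨a :: L, hL.cons a, by simp [hm, h.1]⟩
  | swap x y l =>
    intro L' h
    rcases L' with _ | ⟨a, _ | ⟨b, L'⟩⟩
    · simp at h
    · simp at h
    · simp at h
      exact ⟨b :: a :: L', List.Perm.swap _ _ _, by simp [h]⟩
  | trans _ _ ih1 ih2 =>
    intro L' h
    obtain ⟨L1, h1, h1'⟩ := ih2 L' h
    obtain ⟨L2, h2, h2'⟩ := ih1 L1 h1'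
    exact ⟨L2, h2.trans h1, h2'⟩

/-- The property for a subset `N` of a group. -/
def HasEta {G : Type*} [Group G] (N : Set G) (m : ℕ) : Prop :=
  ∀ S : Multiset G, (∀ g ∈ S, g ∈ N) → S.card = 3 * m - 2 →
    ∃ T ≤ S, T ≠ 0 ∧ T.card ≤ m ∧ IsProductOne T

lemma hasEta_step {G : Type*} [Group G] (N N' : Set G) (p q : ℕ) [Fact p.Prime] (hq : 0 < q)
    (f g : G → ZMod p) (hN1 : (1 : G) ∈ N) (hNm : ∀ x ∈ N, ∀ y ∈ N, x * y ∈ N)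
    (hf1 : f 1 = 0) (hg1 : g 1 = 0)
    (hf : ∀ x ∈ N, ∀ y ∈ N, f (x * y) = f x + f y)
    (hg : ∀ x ∈ N, ∀ y ∈ N, g (x * y) = g x + g y)
    (hN' : ∀ x ∈ N, f x = 0 → g x = 0 → x ∈ N') (h : HasEta N' q) : HasEta N (p * q) := by
  classical
  intro S hSN hS
  have hp : p.Prime := Fact.out
  have hp2 := hp.two_le
  have hlist : ∀ l : List G, (∀ x ∈ l, x ∈ N) →
      l.prod ∈ N ∧ f l.prod = (l.map f).sum ∧ g l.prod = (l.map g).sum := by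
    intro l
    induction l with
    | nil => intro _; simp [hN1, hf1, hg1]
    | cons x l ih =>
      intro hl
      obtain ⟨i1, i2, i3⟩ := ih fun y hy => hl y (List.mem_cons_of_mem _ hy)
      have hx := hl x (List.mem_cons_self)
      simp only [List.prod_cons, List.map_cons, List.sum_cons]
      exact ⟨hNm _ hx _ i1, by rw [hf _ hx _ i1, i2], by rw [hg _ hx _ i1, i3]⟩
  obtain ⟨L, hLl, hLS, hL⟩ := blocks p f g (3 * q - 2) S (by
    rw [hS]
    obtain ⟨r, rfl⟩ : ∃ r, q = r + 1 := ⟨q - 1, by omega⟩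
    have e1 : 3 * (r + 1) - 2 = 3 * r + 1 := by omega
    have e2 : (3 * r + 1) * p = 3 * (p * r) + p := by ring
    have e3 : 3 * (p * (r + 1)) = 3 * (p * r) + 3 * p := by ring
    rw [e1, e2, e3]
    omega)
  obtain ⟨T, hT, hT0, hTc, l, hlT, hl1⟩ := h ((L.map List.prod : List G) : Multiset G) (by
    intro x hx
    rw [Multiset.mem_coe, List.mem_map] at hx
    obtain ⟨l, hl, rfl⟩ := hx
    obtain ⟨a1, a2, a3⟩ := hlist l (fun y hy => hSN y (Multiset.mem_of_le hLS (by
      rw [Multiset.mem_coe]; exact List.mem_flatten.2 ⟨l, hl, hy⟩)))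
    obtain ⟨-, -, b2, b3⟩ := hL l hl
    exact hN' _ a1 (a2.trans b2) (a3.trans b3)) (by simp [hLl])
  subst hlT
  rw [Multiset.coe_le] at hT
  obtain ⟨l1, hl1p, hl1s⟩ := hT
  obtain ⟨L1, hL1, rfl⟩ := List.sublist_map_iff.1 hl1s
  obtain ⟨L2, hL2, rfl⟩ := perm_lift List.prod hl1p.symm L1 rfl
  have hsub : ∀ l ∈ L2, l ∈ L := fun l hl => hL1.subset (hL2.subset hl)
  refine ⟨(L2.flatten : List G), ?_, ?_, ?_, L2.flatten, rfl, ?_⟩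
  · refine le_trans ?_ hLS
    rw [Multiset.coe_le]
    exact hL2.flatten.subperm.trans hL1.flatten.subperm
  · intro h0
    rw [Multiset.coe_eq_zero] at h0
    rcases L2 with _ | ⟨l, L2⟩
    · simp at hT0
    · simp only [List.flatten_cons, List.append_eq_nil_iff] at h0
      exact (hL l (hsub l List.mem_cons_self)).1 h0.1
  · rw [Multiset.coe_card, List.length_flatten]
    have hc : L2.length ≤ q := by simpa using hTc
    have := List.sum_le_card_nsmul (L2.map List.length) p (by
      intro x hx
      obtain ⟨l, hl, rfl⟩ := List.mem_map.1 hx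
      exact (hL l (hsub l hl)).2.1)
    simp only [List.length_map, smul_eq_mul] at this
    calc _ ≤ _ := this
      _ ≤ q * p := Nat.mul_le_mul_right _ hc
      _ = _ := mul_comm _ _
  · rw [List.prod_flatten]; exact hl1

lemma arith_step (M d m p : ℕ) [NeZero M] (hM : d * m = M) (hd : 0 < d) (hpm : p ∣ m)
    (a u a' : ZMod M) (ha : d ∣ a.val) (ha' : d ∣ a'.val) (hu : (u.val : ZMod p) = 1) :
    d ∣ (a + u * a').val ∧
    (((a + u * a').val / d : ℕ) : ZMod p) = ((a.val / d : ℕ) : ZMod p) + ((a'.val / d : ℕ) : ZMod p) := by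
  obtain ⟨x, hx⟩ := ha
  obtain ⟨y, hy⟩ := ha'
  have key : (a + u * a').val = d * ((x + u.val * y) % m) := by
    rw [← Nat.mul_mod_mul_left, hM, ← ZMod.val_natCast]
    congr 1
    push_cast
    rw [mul_add, ZMod.natCast_zmod_val]
    have h1 : a = (d : ZMod M) * x := by
      rw [← Nat.cast_mul, ← hx, ZMod.natCast_zmod_val]
    have h2 : a' = (d : ZMod M) * y := by
      rw [← Nat.cast_mul, ← hy, ZMod.natCast_zmod_val]
    rw [h1, h2]; ring
  refine ⟨⟨_, key⟩, ?_⟩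
  rw [key, hx, hy, Nat.mul_div_cancel_left _ hd, Nat.mul_div_cancel_left _ hd,
    Nat.mul_div_cancel_left _ hd]
  have : (((x + u.val * y) % m : ℕ) : ZMod p) = ((x + u.val * y : ℕ) : ZMod p) := by
    rw [ZMod.natCast_eq_natCast_iff]
    exact (Nat.mod_modEq _ m).of_dvd hpm
  rw [this]
  push_cast
  rw [hu, one_mul]

lemma arith_zero (M d p : ℕ) (hd : 0 < d) (a : ZMod M) (ha : d ∣ a.val)
    (h : ((a.val / d : ℕ) : ZMod p) = 0) : d * p ∣ a.val := by
  rw [ZMod.natCast_eq_zero_iff] at h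
  obtain ⟨x, hx⟩ := ha
  rw [hx, Nat.mul_div_cancel_left _ hd] at h
  rw [hx]; exact Nat.mul_dvd_mul_left _ h

/-- The multiplier of the action. -/
def mult {M : ℕ} (φ : Multiplicative (ZMod M) →* MulAut (Multiplicative (ZMod M)))
    (b : Multiplicative (ZMod M)) : ZMod M :=
  Multiplicative.toAdd (φ b (Multiplicative.ofAdd 1))

lemma act_eq {M : ℕ} [NeZero M] (φ : Multiplicative (ZMod M) →* MulAut (Multiplicative (ZMod M)))
    (b x : Multiplicative (ZMod M)) :
    Multiplicative.toAdd (φ b x) = mult φ b * Multiplicative.toAdd x := by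
  have h : x = (Multiplicative.ofAdd (1 : ZMod M)) ^ (Multiplicative.toAdd x).val := by
    rw [← ofAdd_nsmul]
    simp
  conv_lhs => rw [h]
  rw [map_pow, toAdd_pow, mult, nsmul_eq_mul, ZMod.natCast_zmod_val, mul_comm]

lemma mult_pow {M : ℕ} [NeZero M] (φ : Multiplicative (ZMod M) →* MulAut (Multiplicative (ZMod M)))
    (b : Multiplicative (ZMod M)) (k : ℕ) : mult φ (b ^ k) = mult φ b ^ k := by
  induction k with
  | zero => simp [mult]
  | succ k ih =>
    rw [pow_succ' b, pow_succ', ← ih]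
    conv_lhs => rw [mult, map_mul, MulAut.mul_apply, act_eq]
    rfl

lemma mult_mod {M : ℕ} [NeZero M] (φ : Multiplicative (ZMod M) →* MulAut (Multiplicative (ZMod M)))
    (d m : ℕ) (hM : d * m = M) (hm : m ≠ 1) (b : Multiplicative (ZMod M))
    (hb : d ∣ (Multiplicative.toAdd b).val) :
    ((mult φ b).val : ZMod m.minFac) = 1 := by
  have hp : m.minFac.Prime := Nat.minFac_prime hm
  haveI : Fact m.minFac.Prime := ⟨hp⟩
  have hpM : m.minFac ∣ M := (Nat.minFac_dvd m).trans ⟨d, by rw [← hM, mul_comm]⟩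
  have hM0 : M ≠ 0 := NeZero.ne M
  have hm0 : m ≠ 0 := by rintro rfl; simp at hM; exact hM0 hM.symm
  have hbm : b ^ m = 1 := by
    obtain ⟨x, hx⟩ := hb
    apply Multiplicative.toAdd.injective
    rw [toAdd_pow, nsmul_eq_mul, ← ZMod.natCast_zmod_val (Multiplicative.toAdd b), hx, toAdd_one,
      ← Nat.cast_mul, ZMod.natCast_eq_zero_iff]
    exact ⟨x, by rw [← hM]; ring⟩
  have h1 : mult φ b ^ m = 1 := by
    rw [← mult_pow, hbm]; simp [mult]
  have h2 : (ZMod.castHom hpM (ZMod m.minFac) (mult φ b)) ^ m = 1 := by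
    rw [← map_pow, h1, map_one]
  have h3 : ZMod.castHom hpM (ZMod m.minFac) (mult φ b) = ((mult φ b).val : ZMod m.minFac) := by
    conv_lhs => rw [← ZMod.natCast_zmod_val (mult φ b)]
    rw [map_natCast]
  rw [h3] at h2
  set w := ((mult φ b).val : ZMod m.minFac)
  have hw : w ≠ 0 := by
    intro h; rw [h, zero_pow hm0] at h2; exact zero_ne_one h2
  have h4 := ZMod.pow_card_sub_one_eq_one hw
  have hco : Nat.Coprime m (m.minFac - 1) := by
    refine Nat.Coprime.symm (Nat.coprime_of_dvd fun k hk hk1 hk2 => ?_)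
    have l1 := Nat.minFac_le_of_dvd hk.two_le hk2
    have := hp.two_le
    have l2 := Nat.le_of_dvd (by omega) hk1
    omega
  have h5 := pow_gcd_eq_one.2 ⟨h2, h4⟩
  rwa [hco.gcd_eq_one, pow_one] at h5

lemma main_ind (M : ℕ) [NeZero M] (φ : Multiplicative (ZMod M) →* MulAut (Multiplicative (ZMod M)))
    (m : ℕ) : ∀ d, d * m = M → HasEta {g : Multiplicative (ZMod M) ⋊[φ] Multiplicative (ZMod M) |
      d ∣ (Multiplicative.toAdd g.left).val ∧ d ∣ (Multiplicative.toAdd g.right).val} m := by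
  induction m using Nat.strong_induction_on with
  | _ m ih =>
  intro d hM
  have hM0 : M ≠ 0 := NeZero.ne M
  have hd : 0 < d := Nat.pos_of_ne_zero (by rintro rfl; simp at hM; exact hM0 hM.symm)
  have hm0 : m ≠ 0 := by rintro rfl; simp at hM; exact hM0 hM.symm
  by_cases hm : m = 1
  · subst hm
    intro S hS hc
    simp at hM
    subst hM
    obtain ⟨g, rfl⟩ := Multiset.card_eq_one.1 hc
    have hz : ∀ a : ZMod d, d ∣ a.val → a = 0 := by
      intro a ha
      rw [← ZMod.val_eq_zero]
      exact Nat.eq_zero_of_dvd_of_lt ha (ZMod.val_lt a)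
    have := hS g (by simp)
    refine ⟨{g}, le_rfl, by simp, by simp, [g], rfl, ?_⟩
    rw [List.prod_singleton]
    exact SemidirectProduct.ext (hz _ this.1) (hz _ this.2)
  have hp : m.minFac.Prime := Nat.minFac_prime hm
  haveI : Fact m.minFac.Prime := ⟨hp⟩
  have hpm := Nat.minFac_dvd m
  obtain ⟨q, hq⟩ := hpm
  have hq0 : 0 < q := Nat.pos_of_ne_zero (by rintro rfl; simp at hq; exact hm0 hq)
  have hqm : q < m := by
    have := hp.two_le
    calc q < 2 * q := by omega
      _ ≤ m.minFac * q := Nat.mul_le_mul_right _ this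
      _ = m := hq.symm
  have hstep := fun a u a' => arith_step M d m m.minFac hM hd (Nat.minFac_dvd m) a u a'
  have hone : ((1 : ZMod M).val : ZMod m.minFac) = 1 := by
    have := mult_mod φ d m hM hm 1 (by simp)
    simpa [mult] using this
  have hl : ∀ x y : Multiplicative (ZMod M) ⋊[φ] Multiplicative (ZMod M),
      Multiplicative.toAdd (x * y).left = Multiplicative.toAdd x.left +
        mult φ x.right * Multiplicative.toAdd y.left := by
    intro x y
    rw [SemidirectProduct.mul_left, toAdd_mul, act_eq]
  have hr : ∀ x y : Multiplicative (ZMod M) ⋊[φ] Multiplicative (ZMod M),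
      Multiplicative.toAdd (x * y).right = Multiplicative.toAdd x.right +
        1 * Multiplicative.toAdd y.right := by
    intro x y
    rw [SemidirectProduct.mul_right, toAdd_mul, one_mul]
  have hmm := mult_mod φ d m hM hm
  have key := hasEta_step (p := m.minFac) (q := q) (hq := hq0) (N' := _)
    (fun g : Multiplicative (ZMod M) ⋊[φ] Multiplicative (ZMod M) =>
      (((Multiplicative.toAdd g.left).val / d : ℕ) : ZMod m.minFac))
    (fun g : Multiplicative (ZMod M) ⋊[φ] Multiplicative (ZMod M) => (((Multiplicative.toAdd g.right).val / d : ℕ) : ZMod m.minFac))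
    (N := {g : Multiplicative (ZMod M) ⋊[φ] Multiplicative (ZMod M) | d ∣ (Multiplicative.toAdd g.left).val ∧ d ∣ (Multiplicative.toAdd g.right).val})
    (by simp)
    (by
      intro x hx y hy
      refine ⟨?_, ?_⟩
      · rw [hl]; exact (hstep _ _ _ hx.1 hy.1 (hmm _ hx.2)).1
      · rw [hr]; exact (hstep _ _ _ hx.2 hy.2 hone).1)
    (by simp) (by simp)
    (by
      intro x hx y hy
      beta_reduce
      rw [hl]; exact (hstep _ _ _ hx.1 hy.1 (hmm _ hx.2)).2)
    (by
      intro x hx y hy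
      beta_reduce
      rw [hr]; exact (hstep _ _ _ hx.2 hy.2 hone).2)
    (by
      intro x hx h1 h2
      exact ⟨arith_zero M d _ hd _ hx.1 h1, arith_zero M d _ hd _ hx.2 h2⟩)
    (ih q hqm (d * m.minFac) (by rw [mul_assoc, ← hq, hM]))
  rwa [← hq] at key

/-- Every sequence of length `3m − 2` over `C_m ⋉_φ C_m` contains a nonempty
product-one subsequence of length in `[1, m]`. -/
theorem product_one_subseq_le_m (m : ℕ) (hm : 0 < m)
    (φ : Multiplicative (ZMod m) →* MulAut (Multiplicative (ZMod m)))
    (S : Multiset (Multiplicative (ZMod m) ⋊[φ] Multiplicative (ZMod m)))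
    (hS : Multiset.card S = 3 * m - 2) :
    ∃ T ≤ S, T ≠ 0 ∧ Multiset.card T ≤ m ∧ IsProductOne T := by
  have : NeZero m := ⟨hm.ne'⟩
  exact main_ind m φ m 1 (one_mul m) S (fun g _ => ⟨one_dvd _, one_dvd _⟩) hS
end

section
/- Let G ≅ C_m ⋉_φ C_m. Then every sequence S over G of length |S| = 3m − 2 contains a nonempty product-one subsequence T whose length is divisible by m. -/
namespace POne
open Finset

/-- Functions on subsets of `ι` of polynomial degree at most `d`. -/
def Dg (p : ℕ) (ι : Type) [DecidableEq ι] (d : ℕ) : Submodule (ZMod p) (Finset ι → ZMod p) :=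
  Submodule.span (ZMod p) {f | ∃ A : Finset ι, A.card ≤ d ∧ f = fun I => if A ⊆ I then 1 else 0}

section
set_option linter.unusedSectionVars false
variable {p : ℕ} {ι : Type} [DecidableEq ι]

lemma Dg_mono {d e : ℕ} (h : d ≤ e) : Dg p ι d ≤ Dg p ι e := by
  apply Submodule.span_mono
  rintro f ⟨A, hA, rfl⟩
  exact ⟨A, hA.trans h, rfl⟩

lemma Dg_mul {d e : ℕ} {f g : Finset ι → ZMod p} (hf : f ∈ Dg p ι d) (hg : g ∈ Dg p ι e) :
    f * g ∈ Dg p ι (d + e) := by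
  have h := Submodule.mul_mem_mul hf hg
  unfold Dg at h
  rw [Submodule.span_mul_span] at h
  refine Submodule.span_mono ?_ h
  rintro _ ⟨_, ⟨A, hA, rfl⟩, _, ⟨B, hB, rfl⟩, rfl⟩
  refine ⟨A ∪ B, (card_union_le _ _).trans (by omega), ?_⟩
  funext I
  simp only [Pi.mul_apply, union_subset_iff]
  by_cases h1 : A ⊆ I <;> by_cases h2 : B ⊆ I <;> simp [h1, h2]

lemma Dg_const (c : ZMod p) (d : ℕ) : (fun _ => c : Finset ι → ZMod p) ∈ Dg p ι d := by
  have : (fun _ => c : Finset ι → ZMod p) = c • (fun I => if (∅ : Finset ι) ⊆ I then 1 else 0) := by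
    funext I; simp
  rw [this]
  exact Submodule.smul_mem _ _ (Submodule.subset_span ⟨∅, by simp, rfl⟩)

lemma Dg_pow {d : ℕ} {f : Finset ι → ZMod p} (hf : f ∈ Dg p ι d) (k : ℕ) :
    f ^ k ∈ Dg p ι (k * d) := by
  induction k with
  | zero =>
    have := Dg_const (p := p) (ι := ι) 1 0
    rw [zero_mul, pow_zero]
    exact this
  | succ k ih => rw [pow_succ, add_mul, one_mul]; exact Dg_mul ih hf

lemma Dg_lin [Fintype ι] (a : ι → ZMod p) : (fun I => ∑ i ∈ I, a i) ∈ Dg p ι 1 := by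
  have : (fun I => ∑ i ∈ I, a i) =
      ∑ i : ι, a i • (fun I : Finset ι => if ({i} : Finset ι) ⊆ I then (1 : ZMod p) else 0) := by
    funext I; simp
  rw [this]
  exact Submodule.sum_mem _ fun i _ => Submodule.smul_mem _ _
    (Submodule.subset_span ⟨{i}, by simp, rfl⟩)

lemma Dg_card [Fintype ι] : (fun I : Finset ι => (I.card : ZMod p)) ∈ Dg p ι 1 := by
  simpa using Dg_lin (p := p) (fun _ : ι => (1 : ZMod p))

lemma Dg_choose [Fintype ι] (j : ℕ) :
    (fun I : Finset ι => ((I.card.choose j : ℕ) : ZMod p)) ∈ Dg p ι j := by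
  have : (fun I : Finset ι => ((I.card.choose j : ℕ) : ZMod p)) =
      ∑ A ∈ powersetCard j (univ : Finset ι),
        (fun I : Finset ι => if A ⊆ I then (1 : ZMod p) else 0) := by
    funext I
    rw [Finset.sum_apply, ← card_powersetCard, Finset.sum_boole]
    congr 2
    ext A
    simp [mem_powersetCard, and_comm]
  rw [this]
  refine Submodule.sum_mem _ fun A hA => Submodule.subset_span ⟨A, ?_, rfl⟩
  exact (mem_powersetCard.1 hA).2.le

lemma Dg_vanish {d : ℕ} {f : Finset ι → ZMod p} (hf : f ∈ Dg p ι d) (X : Finset ι)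
    (hX : d < X.card) : ∑ I ∈ X.powerset, (-1) ^ I.card * f I = 0 := by
  unfold Dg at hf
  induction hf using Submodule.span_induction with
  | mem f h =>
    obtain ⟨A, hA, rfl⟩ := h
    obtain ⟨x, hx, hxA⟩ : ∃ x ∈ X, x ∉ A := by
      by_contra! h
      have := card_le_card (s := X) (t := A) h
      omega
    rw [← insert_erase hx, sum_powerset_insert (notMem_erase x X), ← sum_add_distrib]
    apply sum_eq_zero
    intro I hI
    have hxI : x ∉ I := fun h => notMem_erase x X (mem_powerset.1 hI h)
    rw [card_insert_of_notMem hxI]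
    have : A ⊆ insert x I ↔ A ⊆ I := by
      rw [subset_insert_iff_of_notMem hxA]
    simp only [this]
    ring
  | zero => simp
  | add f g _ _ hf hg => simp [mul_add, sum_add_distrib, hf, hg]
  | smul c f _ hf =>
    simp only [Pi.smul_apply, smul_eq_mul]
    rw [← mul_zero c, ← hf, mul_sum]
    exact sum_congr rfl fun _ _ => by ring

lemma Dg_ind [Fintype ι] [Fact p.Prime] {f : Finset ι → ZMod p} (hf : f ∈ Dg p ι 1) :
    (fun I => if f I = 0 then (1 : ZMod p) else 0) ∈ Dg p ι (p - 1) := by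
  have : (fun I => if f I = 0 then (1 : ZMod p) else 0) = (fun _ => 1) - f ^ (p - 1) := by
    funext I
    have hp : 2 ≤ p := (Fact.out : p.Prime).two_le
    by_cases h : f I = 0
    · simp [h, zero_pow (show p - 1 ≠ 0 by omega)]
    · simp [h, ZMod.pow_card_sub_one_eq_one h]
  rw [this]
  exact Submodule.sub_mem _ (Dg_const _ _) (by simpa using Dg_pow hf (p - 1))

/-- Davenport constant of `C_p^3`. -/
lemma davenport3 [Fintype ι] [Fact p.Prime] (a b c : ι → ZMod p) (h : 3 * p - 2 ≤ Fintype.card ι) :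
    ∃ I : Finset ι, I.Nonempty ∧ ∑ i ∈ I, a i = 0 ∧ ∑ i ∈ I, b i = 0 ∧ ∑ i ∈ I, c i = 0 := by
  have hp : 2 ≤ p := (Fact.out : p.Prime).two_le
  by_contra! hcon
  have := Dg_vanish (Dg_mul (Dg_mul (Dg_ind (Dg_lin a)) (Dg_ind (Dg_lin b))) (Dg_ind (Dg_lin c)))
    univ (by rw [card_univ]; omega)
  rw [sum_eq_single ∅] at this
  · simp at this
  · intro I _ hI
    have := hcon I (nonempty_iff_ne_empty.2 hI)
    simp only [Pi.mul_apply]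
    split_ifs <;> simp_all
  · simp

/-- Zero-sum subsets. -/
def ZS (a b : ι → ZMod p) (I : Finset ι) : Prop := ∑ i ∈ I, a i = 0 ∧ ∑ i ∈ I, b i = 0

instance (a b : ι → ZMod p) : DecidablePred (ZS a b) := fun I => by unfold ZS; infer_instance

/-- Number of zero-sum subsets of size `n`, mod `p`. -/
def NZ (a b : ι → ZMod p) (X : Finset ι) (n : ℕ) : ZMod p :=
  (((X.powersetCard n).filter (ZS a b)).card : ZMod p)

lemma key [Fintype ι] [Fact p.Prime] (a b : ι → ZMod p) (X : Finset ι) (H : ℕ → ZMod p) (d : ℕ)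
    (hH : (fun I : Finset ι => H I.card) ∈ Dg p ι d) (hX : 2 * (p - 1) + d < X.card) :
    ∑ n ∈ range (X.card + 1), (-1) ^ n * H n * NZ a b X n = 0 := by
  have := Dg_vanish (Dg_mul (Dg_mul (Dg_ind (Dg_lin a)) (Dg_ind (Dg_lin b))) hH) X (by omega)
  rw [sum_powerset] at this
  rw [← this]
  apply sum_congr rfl
  intro n _
  rw [NZ, ← sum_boole, mul_sum]
  apply sum_congr rfl
  intro I hI
  rw [(mem_powersetCard.1 hI).2]
  simp only [Pi.mul_apply, ZS, (mem_powersetCard.1 hI).2]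
  by_cases h1 : ∑ i ∈ I, a i = 0 <;> by_cases h2 : ∑ i ∈ I, b i = 0 <;> simp [h1, h2]

lemma Dg_per [Fintype ι] [Fact p.Prime] (c : ZMod p) :
    (fun I : Finset ι => if (I.card : ZMod p) + c = 0 then (1 : ZMod p) else 0) ∈ Dg p ι (p - 1) :=
  Dg_ind (f := fun I : Finset ι => (I.card : ZMod p) + c)
    (Submodule.add_mem _ Dg_card (Dg_const c 1))

lemma Dg_two [Fintype ι] [Fact p.Prime] :
    (fun I : Finset ι => (if (I.card : ZMod p) = 0 then (1 : ZMod p) else 0) -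
      (if (I.card : ZMod p) + 1 = 0 then (1 : ZMod p) else 0)) ∈ Dg p ι (p - 2) := by
  have hp : 2 ≤ p := (Fact.out : p.Prime).two_le
  have : (fun I : Finset ι => (if (I.card : ZMod p) = 0 then (1 : ZMod p) else 0) -
      (if (I.card : ZMod p) + 1 = 0 then (1 : ZMod p) else 0)) =
      ∑ k ∈ range (p - 1), ((p - 1).choose k : ZMod p) •
        (fun I : Finset ι => (I.card : ZMod p)) ^ k := by
    funext I
    have key : ∀ x : ZMod p, (if x = 0 then (1 : ZMod p) else 0) = 1 - x ^ (p - 1) := by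
      intro x
      by_cases h : x = 0
      · simp [h, zero_pow (show p - 1 ≠ 0 by omega)]
      · simp [h, ZMod.pow_card_sub_one_eq_one h]
    rw [key, key, add_pow, sum_range_succ]
    simp [mul_comm]
  rw [this]
  refine Submodule.sum_mem _ fun k hk => Submodule.smul_mem _ _ ?_
  refine Dg_mono ?_ (Dg_pow Dg_card k)
  have := mem_range.1 hk
  omega

lemma NZ_zero (a b : ι → ZMod p) (X : Finset ι) : NZ a b X 0 = 1 := by
  simp [NZ, ZS, filter_singleton]

lemma NZ_big (a b : ι → ZMod p) (X : Finset ι) {n : ℕ} (h : X.card < n) : NZ a b X n = 0 := by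
  simp [NZ, powersetCard_eq_empty.2 h]

lemma sum4 {M : ℕ} (hM : M ≤ 4 * p) (f : ℕ → ZMod p) (hp : 0 < p)
    (h0 : ∀ n, M ≤ n → f n = 0) (h : ∀ n : ℕ, (n : ZMod p) ≠ 0 → f n = 0) :
    ∑ n ∈ range M, f n = f 0 + f p + f (2 * p) + f (3 * p) := by
  have h1 : ∑ n ∈ range M, f n = ∑ n ∈ range (4 * p), f n := by
    apply sum_subset (range_mono hM)
    intro n _ hn
    exact h0 n (by simpa using hn)
  have h2 : ∑ n ∈ range (4 * p), f n = ∑ n ∈ (range 4).image (· * p), f n := by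
    symm
    apply sum_subset
    · intro n hn
      simp only [mem_image, mem_range] at *
      obtain ⟨k, hk, rfl⟩ := hn
      exact Nat.mul_lt_mul_of_pos_right hk hp
    · intro n hn hn'
      apply h
      intro h0
      obtain ⟨k, rfl⟩ := (ZMod.natCast_eq_zero_iff n p).1 h0
      apply hn'
      simp only [mem_image, mem_range] at *
      refine ⟨k, ?_, mul_comm _ _⟩
      rw [mul_comm] at hn
      exact Nat.lt_of_mul_lt_mul_right hn
  rw [h1, h2, sum_image]
  · simp [sum_range_succ]
  · intro x _ y _ hxy
    exact Nat.eq_of_mul_eq_mul_right hp hxy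

lemma sum4' {M : ℕ} (hM : M ≤ 4 * p - 1) (f : ℕ → ZMod p) (hp : 0 < p)
    (h0 : ∀ n, M ≤ n → f n = 0) (h : ∀ n : ℕ, (n : ZMod p) + 1 ≠ 0 → f n = 0) :
    ∑ n ∈ range M, f n = f (p - 1) + f (2 * p - 1) + f (3 * p - 1) := by
  have h1 := sum4 (p := p) (M := M + 1) (by omega) (fun n => if n = 0 then 0 else f (n - 1)) hp
    (by
      intro n hn
      rw [if_neg (by omega)]
      exact h0 _ (by omega))
    (by
      intro n hn
      rcases n with _ | n
      · simp
      · simp only [Nat.add_eq_zero_iff, one_ne_zero, and_false, if_false, Nat.add_sub_cancel]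
        apply h
        simpa using hn)
  rw [sum_range_succ'] at h1
  simp [hp.ne'] at h1
  exact h1

section Reiher
variable [Fintype ι] [Fact p.Prime]

lemma lemA (hodd : Odd p) (a b : ι → ZMod p) (X : Finset ι) (h1 : 3 * p - 2 ≤ X.card)
    (h2 : X.card ≤ 4 * p - 3) :
    1 - NZ a b X p + NZ a b X (2 * p) - NZ a b X (3 * p) = 0 := by
  have hp : 2 ≤ p := (Fact.out : p.Prime).two_le
  have h := key a b X (fun n => if (n : ZMod p) + 0 = 0 then (1 : ZMod p) else 0) (p - 1)
    (Dg_per 0) (by omega)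
  rw [sum4 (by omega) _ (by omega)] at h
  · simp [NZ_zero, hodd.neg_one_pow, pow_mul] at h
    have e3 : Odd 3 := by decide
    simp [e3.neg_one_pow] at h
    linear_combination h
  · intro n hn
    rw [NZ_big _ _ _ (by omega), mul_zero]
  · intro n hn
    simp [hn]

lemma odd_pm {k : ℕ} (hk : 0 < k) (hodd : Odd p) : (-1 : ZMod p) ^ (k * p - 1) = - (-1) ^ k := by
  have hp : 0 < p := hodd.pos
  have h : (-1 : ZMod p) ^ (k * p - 1) * (-1) = (-1) ^ k := by
    rw [← pow_succ, Nat.sub_add_cancel (Nat.mul_pos hk hp), mul_comm, pow_mul, hodd.neg_one_pow]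
  linear_combination -h

lemma cast_pm {k : ℕ} (hk : 0 < k) : ((k * p - 1 : ℕ) : ZMod p) + 1 = 0 := by
  have hp : 0 < p := (Fact.out : p.Prime).pos
  have : ((k * p - 1 + 1 : ℕ) : ZMod p) = 0 := by
    rw [Nat.sub_add_cancel (Nat.mul_pos hk hp)]; simp
  exact_mod_cast this

lemma lemB (hodd : Odd p) (a b : ι → ZMod p) (X : Finset ι) (h1 : X.card = 4 * p - 3) :
    NZ a b X (p - 1) - NZ a b X (2 * p - 1) + NZ a b X (3 * p - 1) = 0 := by
  have hp : 2 ≤ p := (Fact.out : p.Prime).two_le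
  have h := key a b X (fun n => if (n : ZMod p) + 1 = 0 then (1 : ZMod p) else 0) (p - 1)
    (Dg_per 1) (by omega)
  rw [sum4' (by omega) _ (by omega)] at h
  · have e1 := odd_pm (p := p) one_pos hodd
    have e2 := odd_pm (p := p) two_pos hodd
    have e3 := odd_pm (p := p) three_pos hodd
    have c1 := cast_pm (p := p) one_pos
    have c2 := cast_pm (p := p) two_pos
    have c3 := cast_pm (p := p) three_pos
    rw [one_mul] at e1 c1
    simp only [e1, e2, e3, c1, c2, c3, if_true] at h
    linear_combination h
  · intro n hn
    rw [NZ_big _ _ _ (by omega), mul_zero]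
  · intro n hn
    simp [hn]

lemma choose_p (n : ℕ) : ((n.choose p : ℕ) : ZMod p) = ((n / p : ℕ) : ZMod p) := by
  have hp : 2 ≤ p := (Fact.out : p.Prime).two_le
  have h := Choose.choose_modEq_choose_mod_mul_choose_div_nat (n := n) (k := p) (p := p)
  rw [Nat.mod_self, Nat.div_self (by omega)] at h
  simp at h
  exact (ZMod.natCast_eq_natCast_iff _ _ _).2 h

lemma lemC (hodd : Odd p) (a b : ι → ZMod p) (X : Finset ι) (h1 : X.card = 4 * p - 3) :
    - NZ a b X p + 2 * NZ a b X (2 * p) - 3 * NZ a b X (3 * p)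
      + NZ a b X (2 * p - 1) - 2 * NZ a b X (3 * p - 1) = 0 := by
  have hp : 2 ≤ p := (Fact.out : p.Prime).two_le
  have h := key a b X (fun n => ((if (n : ZMod p) = 0 then (1 : ZMod p) else 0) -
      (if (n : ZMod p) + 1 = 0 then (1 : ZMod p) else 0)) * ((n.choose p : ℕ) : ZMod p))
      (p - 2 + p) (Dg_mul Dg_two (Dg_choose p)) (by omega)
  simp only [mul_sub, sub_mul, sum_sub_distrib] at h
  rw [sum4 (by omega) _ (by omega), sum4' (by omega) _ (by omega)] at h
  · have e1 := odd_pm (p := p) one_pos hodd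
    have e2 := odd_pm (p := p) two_pos hodd
    have e3 := odd_pm (p := p) three_pos hodd
    have c1 := cast_pm (p := p) one_pos
    have c2 := cast_pm (p := p) two_pos
    have c3 := cast_pm (p := p) three_pos
    rw [one_mul] at e1 c1
    have d0 : p / p = 1 := Nat.div_self (by omega)
    have d1 : (p - 1) / p = 0 := Nat.div_eq_of_lt (by omega)
    have d2 : (2 * p - 1) / p = 1 := by
      rw [Nat.div_eq_iff (by omega)]; omega
    have d3 : (3 * p - 1) / p = 2 := by
      rw [Nat.div_eq_iff (by omega)]; omega
    have d4 : (2 * p) / p = 2 := Nat.mul_div_cancel _ (by omega)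
    have d5 : (3 * p) / p = 3 := Nat.mul_div_cancel _ (by omega)
    have o3 : Odd 3 := by decide
    have f2 : (-1 : ZMod p) ^ (2 * p) = 1 := by rw [pow_mul]; simp
    have f3 : (-1 : ZMod p) ^ (3 * p) = -1 := by rw [pow_mul, o3.neg_one_pow, hodd.neg_one_pow]
    have z1 : ((p : ℕ) : ZMod p) = 0 := by simp
    have z2 : ((2 * p : ℕ) : ZMod p) = 0 := by simp
    have z3 : ((3 * p : ℕ) : ZMod p) = 0 := by simp
    simp only [choose_p, e1, e2, e3, c1, c2, c3, d0, d1, d2, d3, d4, d5, f2, f3, z1, z2, z3,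
      hodd.neg_one_pow, if_true, Nat.zero_div] at h
    push_cast at h
    linear_combination h
  · intro n hn
    rw [NZ_big _ _ _ (by omega), mul_zero]
  · intro n hn
    simp [hn]
  · intro n hn
    rw [NZ_big _ _ _ (by omega), mul_zero]
  · intro n hn
    simp [hn]

lemma ZS_union {a b : ι → ZMod p} {I J : Finset ι} (hd : Disjoint I J) (hI : ZS a b I)
    (hJ : ZS a b J) : ZS a b (I ∪ J) := by
  unfold ZS at *
  rw [sum_union hd, sum_union hd, hI.1, hI.2, hJ.1, hJ.2]
  simp

lemma ZS_sdiff {a b : ι → ZMod p} {I J : Finset ι} (hd : J ⊆ I) (hI : ZS a b I)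
    (hJ : ZS a b J) : ZS a b (I \ J) := by
  unfold ZS at *
  have h1 := sum_sdiff (f := a) hd
  have h2 := sum_sdiff (f := b) hd
  rw [hI.1, hJ.1, add_zero] at h1
  rw [hI.2, hJ.2, add_zero] at h2
  exact ⟨h1, h2⟩

lemma lemD (a b : ι → ZMod p) (X : Finset ι)
    (hA : ∀ A ⊆ X, A.card = p - 1 → NZ a b (X \ A) (2 * p) = -1)
    (hB : ∀ B ⊆ X, B.card = 3 * p - 1 → NZ a b B (2 * p) = -1) :
    NZ a b X (p - 1) = NZ a b X (3 * p - 1) := by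
  have hp : 2 ≤ p := (Fact.out : p.Prime).two_le
  have h1 : ∑ A ∈ (X.powersetCard (p - 1)).filter (ZS a b), NZ a b (X \ A) (2 * p) =
      - NZ a b X (p - 1) := by
    rw [sum_congr rfl (g := fun _ => (-1 : ZMod p))]
    · simp [NZ]
    · intro A hA'
      have := mem_powersetCard.1 (mem_filter.1 hA').1
      exact hA A this.1 this.2
  have h2 : ∑ B ∈ (X.powersetCard (3 * p - 1)).filter (ZS a b), NZ a b B (2 * p) =
      - NZ a b X (3 * p - 1) := by
    rw [sum_congr rfl (g := fun _ => (-1 : ZMod p))]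
    · simp [NZ]
    · intro A hA'
      have := mem_powersetCard.1 (mem_filter.1 hA').1
      exact hB A this.1 this.2
  have h3 : ∑ A ∈ (X.powersetCard (p - 1)).filter (ZS a b), NZ a b (X \ A) (2 * p) =
      ∑ B ∈ (X.powersetCard (3 * p - 1)).filter (ZS a b), NZ a b B (2 * p) := by
    unfold NZ
    rw [← Nat.cast_sum, ← Nat.cast_sum, ← card_sigma, ← card_sigma]
    congr 1
    refine card_bij' (fun x _ => ⟨x.1 ∪ x.2, x.2⟩) (fun x _ => ⟨x.1 \ x.2, x.2⟩) ?_ ?_ ?_ ?_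
    · rintro ⟨A, C⟩ h
      simp only [mem_sigma, mem_filter, mem_powersetCard] at h ⊢
      obtain ⟨⟨⟨hAX, hAc⟩, hAz⟩, ⟨hC, hCc⟩, hCz⟩ := h
      have hd : Disjoint A C := (disjoint_of_subset_left hC sdiff_disjoint).symm
      refine ⟨⟨⟨union_subset hAX (hC.trans sdiff_subset), ?_⟩, ZS_union hd hAz hCz⟩,
        ⟨subset_union_right, hCc⟩, hCz⟩
      rw [card_union_of_disjoint hd]; omega
    · rintro ⟨B, C⟩ h
      simp only [mem_sigma, mem_filter, mem_powersetCard] at h ⊢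
      obtain ⟨⟨⟨hBX, hBc⟩, hBz⟩, ⟨hC, hCc⟩, hCz⟩ := h
      refine ⟨⟨⟨sdiff_subset.trans hBX, ?_⟩, ZS_sdiff hC hBz hCz⟩, ⟨?_, hCc⟩, hCz⟩
      · rw [card_sdiff_of_subset hC]; omega
      · intro x hx
        simp [hBX (hC hx), hx]
    · rintro ⟨A, C⟩ h
      simp only [mem_sigma, mem_filter, mem_powersetCard] at h ⊢
      obtain ⟨⟨⟨hAX, hAc⟩, hAz⟩, ⟨hC, hCc⟩, hCz⟩ := h
      have hd : Disjoint A C := (disjoint_of_subset_left hC sdiff_disjoint).symm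
      rw [union_sdiff_cancel_right hd]
    · rintro ⟨B, C⟩ h
      simp only [mem_sigma, mem_filter, mem_powersetCard] at h ⊢
      obtain ⟨⟨⟨hBX, hBc⟩, hBz⟩, ⟨hC, hCc⟩, hCz⟩ := h
      rw [sdiff_union_of_subset hC]
  rw [h1, h2] at h3
  exact neg_injective h3

lemma NZ_ne {a b : ι → ZMod p} {X : Finset ι} {n : ℕ} (h : NZ a b X n ≠ 0) :
    ∃ I ⊆ X, I.card = n ∧ ZS a b I := by
  by_contra! hcon
  apply h
  unfold NZ
  rw [filter_eq_empty_iff.2]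
  · simp
  · intro I hI
    have := mem_powersetCard.1 hI
    exact hcon I this.1 this.2

lemma NZ_eq {a b : ι → ZMod p} {X : Finset ι} {n : ℕ} (h : ∀ I ⊆ X, I.card = n → ¬ ZS a b I) :
    NZ a b X n = 0 := by
  by_contra hc
  obtain ⟨I, h1, h2, h3⟩ := NZ_ne hc
  exact h I h1 h2 h3

lemma kemnitz_odd (hodd : Odd p) (a b : ι → ZMod p) (X : Finset ι) (hX : X.card = 4 * p - 3) :
    ∃ I ⊆ X, I.card = p ∧ ZS a b I := by
  have hp : 2 ≤ p := (Fact.out : p.Prime).two_le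
  by_contra! hcon
  have hmid : ∀ J ⊆ X, (J.card = 3 * p - 2 ∨ J.card = 3 * p - 1) → NZ a b J (2 * p) = -1 := by
    intro J hJ hc
    have h := lemA hodd a b J (by omega) (by have := card_le_card hJ; omega)
    rw [NZ_eq (fun I hI => hcon I (hI.trans hJ)), NZ_big a b J (n := 3 * p) (by omega)] at h
    linear_combination h
  have hone : (-1 : ZMod p) ≠ 0 := by simp
  have h3 : NZ a b X (3 * p) = 0 := by
    apply NZ_eq
    intro I hI hc hz
    obtain ⟨x, hx⟩ : I.Nonempty := card_pos.1 (by omega)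
    have h := hmid (I.erase x) ((erase_subset _ _).trans hI)
      (Or.inr (by rw [card_erase_of_mem hx, hc]))
    obtain ⟨C, hC, hCc, hCz⟩ := NZ_ne (h ▸ hone)
    have hCI := hC.trans (erase_subset _ _)
    refine hcon (I \ C) (sdiff_subset.trans hI) ?_ (ZS_sdiff hCI hz hCz)
    rw [card_sdiff_of_subset hCI]; omega
  have hP : NZ a b X p = 0 := NZ_eq hcon
  have hA := lemA hodd a b X (by omega) hX.le
  have hB := lemB hodd a b X hX
  have hC := lemC hodd a b X hX
  have hD := lemD a b X
    (fun A hA hc => hmid _ sdiff_subset (Or.inl (by rw [card_sdiff_of_subset hA]; omega)))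
    (fun B hB hc => hmid B hB (Or.inr hc))
  rw [hP, h3] at hA hC
  have h2 : ((2 : ℕ) : ZMod p) = 0 := by
    push_cast
    linear_combination 2 * hA - hC - hB + hD
  rw [ZMod.natCast_eq_zero_iff] at h2
  have := Nat.le_of_dvd two_pos h2
  have : p = 2 := by omega
  subst this
  revert hodd; decide

lemma kemnitz (a b : ι → ZMod p) (hX : Fintype.card ι = 4 * p - 3) :
    ∃ I : Finset ι, I.card = p ∧ ∑ i ∈ I, a i = 0 ∧ ∑ i ∈ I, b i = 0 := by
  rcases (Fact.out : p.Prime).eq_two_or_odd' with h | h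
  · subst h
    obtain ⟨x, y, hne, hxy⟩ := Fintype.exists_ne_map_eq_of_card_lt (fun i => (a i, b i))
      (by rw [hX]; simp)
    refine ⟨{x, y}, card_pair hne, ?_⟩
    rw [sum_pair hne, sum_pair hne]
    simp only [Prod.mk.injEq] at hxy
    rw [hxy.1, hxy.2]
    exact ⟨CharTwo.add_self_eq_zero _, CharTwo.add_self_eq_zero _⟩
  · obtain ⟨I, _, h1, h2⟩ := kemnitz_odd h a b univ (by rw [card_univ, hX])
    exact ⟨I, h1, h2⟩
end Reiher
end
end POne

namespace POne
open Finset

lemma dvd_num {m p q d : ℕ} (hp : p.Prime) (hm : m = p * q) (hm0 : 0 < m)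
    (hmax : ∀ r, r.Prime → r ∣ m → r ≤ p) (h1 : d ∣ m) (h2 : d ∣ m.totient) : d ∣ q := by
  have h3 : d * p ∣ m * ∏ r ∈ m.primeFactors, (r - 1) := by
    rw [← Nat.totient_mul_prod_primeFactors]
    refine mul_dvd_mul h2 (dvd_prod_of_mem (fun r => r) ?_)
    rw [Nat.mem_primeFactors]
    exact ⟨hp, ⟨q, hm⟩, hm0.ne'⟩
  obtain ⟨k, hk⟩ := h1
  have hd : 0 < d := Nat.pos_of_ne_zero (by rintro rfl; simp at hk; omega)
  rw [hk, mul_assoc] at h3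
  have h4 := Nat.dvd_of_mul_dvd_mul_left hd h3
  have h5 : p ∣ k := by
    rw [← hk] at h4
    rcases (Nat.Prime.dvd_mul hp).1 h4 with h | h
    · exact h
    · exfalso
      obtain ⟨r, hr, hd⟩ := (Prime.dvd_finsetProd_iff hp.prime _).1 h
      rw [Nat.mem_primeFactors] at hr
      have := hmax r hr.1 hr.2.1
      have h2 := hr.1.two_le
      have := Nat.le_of_dvd (by omega) hd
      omega
  obtain ⟨c, rfl⟩ := h5
  refine ⟨c, Nat.eq_of_mul_eq_mul_left hp.pos ?_⟩
  rw [← hm, hk]; ring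

lemma pow_num {m p q n s : ℕ} (hp : p.Prime) (hm : m = p * q) (hm0 : 0 < m)
    (hmax : ∀ r, r.Prime → r ∣ m → r ≤ p) (hn : n ∣ m) (hs : s ^ m ≡ 1 [MOD n]) :
    s ^ q ≡ 1 [MOD n] := by
  have hn0 : 0 < n := Nat.pos_of_dvd_of_pos hn hm0
  have hc : Nat.Coprime s n := by
    have h1 : Nat.Coprime (s ^ m) n := by
      have := hs.gcd_eq
      rw [Nat.gcd_one_left] at this
      exact this
    exact (Nat.coprime_pow_left_iff hm0 s n).1 h1
  let u := ZMod.unitOfCoprime s hc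
  have hu : ∀ k, u ^ k = 1 ↔ s ^ k ≡ 1 [MOD n] := by
    intro k
    rw [← ZMod.natCast_eq_natCast_iff, Units.ext_iff]
    simp [u]
  rw [← hu] at hs ⊢
  apply orderOf_dvd_iff_pow_eq_one.1
  refine dvd_num hp hm hm0 hmax (orderOf_dvd_of_pow_eq_one hs) ?_
  exact (orderOf_dvd_of_pow_eq_one (ZMod.pow_totient u)).trans (Nat.totient_dvd_of_dvd hn)

/-- Quotients of `C_m ⋊ C_m`. -/
def Good (m : ℕ) (G : Type) [Group G] : Prop :=
  ∃ (x y : G) (s : ℕ), x ^ m = 1 ∧ y ^ m = 1 ∧ SemiconjBy y x (x ^ s) ∧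
    ∀ g : G, ∃ i j : ℕ, g = x ^ i * y ^ j

lemma semiconj_pow {G : Type} [Group G] {x y : G} {s : ℕ} (h : SemiconjBy y x (x ^ s)) (b : ℕ) :
    SemiconjBy (y ^ b) x (x ^ (s ^ b)) := by
  induction b with
  | zero => simp
  | succ b ih =>
    rw [pow_succ, pow_succ, pow_mul]
    refine SemiconjBy.mul_left ?_ h
    exact SemiconjBy.pow_right ih s

lemma good_step {m : ℕ} (hm : 1 < m) {G : Type} [Group G] (hG : Good m G) :
    ∃ p q : ℕ, p.Prime ∧ m = p * q ∧ 0 < q ∧ ∃ (K : Subgroup G) (_ : K.Normal), Good q (G ⧸ K) ∧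
      ∃ u v : G, Commute u v ∧ u ^ p = 1 ∧ v ^ p = 1 ∧ ∀ g ∈ K, ∃ i j : ℤ, g = u ^ i * v ^ j := by
  obtain ⟨x, y, s, hx, hy, hs, hgen⟩ := hG
  obtain ⟨p, hpm, hmax⟩ := exists_max_image m.primeFactors id
    (Nat.nonempty_primeFactors.2 hm)
  rw [Nat.mem_primeFactors] at hpm
  obtain ⟨hp, ⟨q, hq⟩, hm0⟩ := hpm
  have hq0 : 0 < q := Nat.pos_of_ne_zero (by rintro rfl; simp at hq; omega)
  have hmax' : ∀ r, r.Prime → r ∣ m → r ≤ p := fun r h1 h2 =>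
    hmax r (Nat.mem_primeFactors.2 ⟨h1, h2, hm0⟩)
  have hyx : Commute (y ^ q) x := by
    have h1 := semiconj_pow hs m
    rw [hy, SemiconjBy, one_mul, mul_one] at h1
    have h2 : s ^ m ≡ 1 [MOD orderOf x] := by
      rw [← pow_eq_pow_iff_modEq, pow_one, ← h1]
    have h3 := pow_num hp hq (by omega) hmax' (orderOf_dvd_of_pow_eq_one hx) h2
    rw [← pow_eq_pow_iff_modEq, pow_one] at h3
    have h4 := semiconj_pow hs q
    rwa [h3] at h4
  have huv : Commute (x ^ q) (y ^ q) := (hyx.pow_right q).symm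
  have hcen : ∀ g, Commute g (y ^ q) := by
    intro g
    obtain ⟨i, j, rfl⟩ := hgen g
    exact (hyx.symm.pow_left i).mul_left ((Commute.refl y).pow_pow j q)
  have hnor : ∀ g, ∃ t : ℕ, SemiconjBy g (x ^ q) ((x ^ q) ^ t) := by
    intro g
    obtain ⟨i, j, rfl⟩ := hgen g
    refine ⟨s ^ j, ?_⟩
    have h1 := (semiconj_pow hs j).pow_right q
    rw [← pow_mul, mul_comm, pow_mul] at h1
    refine SemiconjBy.mul_left ?_ h1
    rw [← pow_mul]
    exact (Commute.refl x).pow_pow i _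
  let K : Subgroup G :=
    { carrier := {g | ∃ i j : ℤ, g = (x ^ q) ^ i * (y ^ q) ^ j}
      one_mem' := ⟨0, 0, by simp⟩
      mul_mem' := by
        rintro _ _ ⟨i, j, rfl⟩ ⟨k, l, rfl⟩
        refine ⟨i + k, j + l, ?_⟩
        rw [zpow_add, zpow_add, mul_assoc, mul_assoc, ← mul_assoc ((y ^ q) ^ j),
          ← (huv.zpow_zpow k j).eq, mul_assoc]
      inv_mem' := by
        rintro _ ⟨i, j, rfl⟩
        refine ⟨-i, -j, ?_⟩
        rw [mul_inv_rev, ← zpow_neg, ← zpow_neg, (huv.zpow_zpow (-i) (-j)).eq] }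
  have hK : ∀ g, g ∈ K ↔ ∃ i j : ℤ, g = (x ^ q) ^ i * (y ^ q) ^ j := fun g => Iff.rfl
  have hKn : K.Normal := by
    constructor
    intro n hn g
    obtain ⟨i, j, rfl⟩ := (hK n).1 hn
    obtain ⟨t, ht⟩ := hnor g
    have h1 := ht.zpow_right i
    have h2 := (hcen g).zpow_right j
    rw [hK]
    refine ⟨t * i, j, ?_⟩
    rw [← mul_assoc, h1.eq, mul_assoc _ g, h2.eq, zpow_mul, zpow_natCast]
    group
  refine ⟨p, q, hp, hq, hq0, K, hKn, ?_, x ^ q, y ^ q, huv, ?_, ?_, fun g hg => (hK g).1 hg⟩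
  · refine ⟨QuotientGroup.mk x, QuotientGroup.mk y, s, ?_, ?_, ?_, ?_⟩
    · rw [← QuotientGroup.mk_pow, QuotientGroup.eq_one_iff, hK]
      exact ⟨1, 0, by simp⟩
    · rw [← QuotientGroup.mk_pow, QuotientGroup.eq_one_iff, hK]
      exact ⟨0, 1, by simp⟩
    · have := hs.map (QuotientGroup.mk' K)
      simpa using this
    · intro g
      obtain ⟨g, rfl⟩ := QuotientGroup.mk_surjective g
      obtain ⟨i, j, rfl⟩ := hgen g
      exact ⟨i, j, rfl⟩
  · rw [← pow_mul, mul_comm, ← hq, hx]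
  · rw [← pow_mul, mul_comm, ← hq, hy]

lemma lift_list {G G' : Type} (f : G → G') (l' : List G') : ∀ S : Multiset G,
    (l' : Multiset G') ≤ S.map f → ∃ l : List G, (l : Multiset G) ≤ S ∧ l.map f = l' := by
  induction l' with
  | nil => intro S _; exact ⟨[], by simp, rfl⟩
  | cons c l' ih =>
    intro S h
    have hc : c ∈ S.map f := Multiset.mem_of_le h (by simp)
    obtain ⟨g, hg, rfl⟩ := Multiset.mem_map.1 hc
    obtain ⟨S', rfl⟩ := Multiset.exists_cons_of_mem hg
    rw [Multiset.map_cons, ← Multiset.cons_coe, Multiset.cons_le_cons_iff] at h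
    obtain ⟨l, h1, h2⟩ := ih S' h
    refine ⟨g :: l, ?_, by simp [h2]⟩
    rw [← Multiset.cons_coe]
    exact Multiset.cons_le_cons g h1

lemma lift_po {G G' : Type} [Group G] [Group G'] (f : G →* G') (S : Multiset G)
    (T : Multiset G') (hT : T ≤ S.map f) (h1 : IsProductOne T) :
    ∃ l : List G, (l : Multiset G) ≤ S ∧ l.length = Multiset.card T ∧ f l.prod = 1 := by
  obtain ⟨l', rfl, h1⟩ := h1
  obtain ⟨l, h2, rfl⟩ := lift_list f l' S hT
  exact ⟨l, h2, by simp, by rw [map_list_prod, h1]⟩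

/-- Every long sequence has a product-one subsequence of length `m`. -/
def P1 (m : ℕ) (G : Type) [Group G] : Prop :=
  ∀ S : Multiset G, 4 * m - 3 ≤ Multiset.card S → ∃ T ≤ S, Multiset.card T = m ∧ IsProductOne T

lemma extract {G G' : Type} [Group G] [Group G'] (f : G →* G') {q : ℕ} (hq : 0 < q)
    (hP : P1 q G') (k : ℕ) : ∀ S : Multiset G, k * q + 3 * q - 3 ≤ Multiset.card S →
    ∃ L : Fin k → List G, ∑ i, (L i : Multiset G) ≤ S ∧
      ∀ i, (L i).length = q ∧ f (L i).prod = 1 := by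
  classical
  induction k with
  | zero => intro S _; exact ⟨fun _ => [], by simp, fun i => i.elim0⟩
  | succ k ih =>
    intro S hS
    rw [add_mul, one_mul] at hS
    obtain ⟨T, hT, hc, h1⟩ := hP (S.map f) (by rw [Multiset.card_map]; omega)
    obtain ⟨l, hl, hlen, hl1⟩ := lift_po f S T hT h1
    obtain ⟨S', rfl⟩ := Multiset.le_iff_exists_add.1 hl
    rw [Multiset.card_add, Multiset.coe_card] at hS
    obtain ⟨L, hL, hL'⟩ := ih S' (by omega)
    refine ⟨Fin.cons l L, ?_, ?_⟩
    · rw [Fin.sum_univ_succ]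
      simpa using hL
    · intro i
      refine Fin.cases ?_ ?_ i
      · exact ⟨by simp [hlen, hc], by simpa using hl1⟩
      · intro j
        simpa using hL' j

lemma assemble {G ι : Type} [Group G] [DecidableEq ι] {u v : G} (huv : Commute u v)
    (L : ι → List G) (e f : ι → ℤ) (hL : ∀ i, (L i).prod = u ^ e i * v ^ f i) (I : Finset ι) :
    ∃ l : List G, (l : Multiset G) = ∑ i ∈ I, (L i : Multiset G) ∧
      l.prod = u ^ (∑ i ∈ I, e i) * v ^ (∑ i ∈ I, f i) := by
  induction I using Finset.induction_on with
  | empty => exact ⟨[], by simp, by simp⟩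
  | insert i I hi ih =>
    obtain ⟨l, h1, h2⟩ := ih
    refine ⟨L i ++ l, ?_, ?_⟩
    · rw [sum_insert hi, ← h1, Multiset.coe_add]
    · rw [sum_insert hi, sum_insert hi, List.prod_append, h2, hL, zpow_add, zpow_add, mul_assoc,
        mul_assoc, ← mul_assoc (v ^ f i), ← (huv.zpow_zpow _ (f i)).eq, mul_assoc]

lemma zpow_one_of {G : Type} [Group G] {u : G} {p : ℕ} (hu : u ^ p = 1) {n : ℤ}
    (hn : (n : ZMod p) = 0) : u ^ n = 1 := by
  obtain ⟨k, rfl⟩ := (ZMod.intCast_zmod_eq_zero_iff_dvd n p).1 hn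
  rw [zpow_mul, zpow_natCast, hu, one_zpow]

lemma assemble' {G ι : Type} [Group G] [DecidableEq ι] {u v : G} {p : ℕ} (huv : Commute u v)
    (hu : u ^ p = 1) (hv : v ^ p = 1)
    (L : ι → List G) (e f : ι → ℤ) (hL : ∀ i, (L i).prod = u ^ e i * v ^ f i) (I : Finset ι)
    (he : ∑ i ∈ I, (e i : ZMod p) = 0) (hf : ∑ i ∈ I, (f i : ZMod p) = 0) :
    IsProductOne (∑ i ∈ I, (L i : Multiset G)) := by
  obtain ⟨l, h1, h2⟩ := assemble huv L e f hL I
  refine ⟨l, h1, ?_⟩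
  rw [h2, zpow_one_of hu (by push_cast; exact he), zpow_one_of hv (by push_cast; exact hf), one_mul]

lemma trivial_of_good {G : Type} [Group G] (h : Good 1 G) (g : G) : g = 1 := by
  obtain ⟨x, y, s, hx, hy, _, hg⟩ := h
  obtain ⟨i, j, rfl⟩ := hg g
  rw [pow_one] at hx hy
  simp [hx, hy]

lemma po_singleton {G : Type} [Group G] (h : Good 1 G) (S : Multiset G)
    (hS : 1 ≤ Multiset.card S) : ∃ T ≤ S, Multiset.card T = 1 ∧ IsProductOne T := by
  obtain ⟨g, hg⟩ := Multiset.card_pos_iff_exists_mem.1 hS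
  exact ⟨{g}, Multiset.singleton_le.2 hg, by simp, [g], by simp, by simp [trivial_of_good h g]⟩

theorem P1_of_good (m : ℕ) (hm : 0 < m) : ∀ (G : Type) [Group G], Good m G → P1 m G := by
  induction m using Nat.strong_induction_on with
  | _ m ih =>
  intro G _ hG S hS
  rcases Nat.lt_or_ge 1 m with h1 | h1
  · obtain ⟨p, q, hp, hpq, hq, K, hKn, hgood, u, v, huv, hu, hv, hK⟩ := good_step h1 hG
    have : Fact p.Prime := ⟨hp⟩
    have hp2 := hp.two_le
    have hlt : q < m := by rw [hpq]; nlinarith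
    have hP := ih q hlt hq (G ⧸ K) hgood
    obtain ⟨L, hL, hL'⟩ := extract (QuotientGroup.mk' K) hq hP (4 * p - 3) S (by
      refine le_trans (le_of_eq ?_) hS
      rw [hpq, Nat.sub_mul, ← mul_assoc, Nat.sub_add_cancel]
      exact Nat.mul_le_mul_right q (by omega))
    have hex : ∀ i, ∃ e f : ℤ, (L i).prod = u ^ e * v ^ f := fun i =>
      hK _ ((QuotientGroup.eq_one_iff _).1 (hL' i).2)
    choose e f hef using hex
    obtain ⟨I, hI, he, hf⟩ := kemnitz (fun i => (e i : ZMod p)) (fun i => (f i : ZMod p))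
      (by rw [Fintype.card_fin])
    refine ⟨∑ i ∈ I, (L i : Multiset G), ?_, ?_, assemble' huv hu hv L e f hef I he hf⟩
    · exact (sum_le_sum_of_subset (subset_univ I)).trans hL
    · rw [Multiset.card_sum, sum_congr rfl (g := fun _ => q)]
      · simp [hI, hpq]
      · intro i _
        simp [(hL' i).1]
  · obtain rfl : m = 1 := by omega
    exact po_singleton hG S hS

theorem main_of_good (m : ℕ) (hm : 0 < m) : ∀ (G : Type) [Group G], Good m G →
    ∀ S : Multiset G, 3 * m - 2 ≤ Multiset.card S →
    ∃ T ≤ S, T ≠ 0 ∧ m ∣ Multiset.card T ∧ IsProductOne T := by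
  induction m using Nat.strong_induction_on with
  | _ m ih =>
  intro G _ hG S hS
  rcases Nat.lt_or_ge 1 m with h1 | h1
  · obtain ⟨p, q, hp, hpq, hq, K, hKn, hgood, u, v, huv, hu, hv, hK⟩ := good_step h1 hG
    have : Fact p.Prime := ⟨hp⟩
    have hp2 := hp.two_le
    have hlt : q < m := by rw [hpq]; nlinarith
    have hP := P1_of_good q hq (G ⧸ K) hgood
    have hmul : (3 * p - 3) * q + 3 * q = 3 * m := by
      rw [hpq, ← mul_assoc, ← add_mul, Nat.sub_add_cancel (by omega)]
    obtain ⟨L, hL, hL'⟩ := extract (QuotientGroup.mk' K) hq hP (3 * p - 3) S (by omega)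
    obtain ⟨S', hS'⟩ := Multiset.le_iff_exists_add.1 hL
    have hcard : Multiset.card S = (3 * p - 3) * q + Multiset.card S' := by
      rw [hS', Multiset.card_add, Multiset.card_sum, sum_congr rfl (g := fun _ => q)]
      · simp
      · intro i _
        simp [(hL' i).1]
    obtain ⟨T, hT, hT0, hTd, hT1⟩ := ih q hlt hq (G ⧸ K) hgood
      (S'.map (QuotientGroup.mk' K)) (by rw [Multiset.card_map]; omega)
    obtain ⟨l, hl, hlen, hl1⟩ := lift_po _ S' T hT hT1
    let M : Fin (3 * p - 3 + 1) → List G := Fin.cons l L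
    have hMS : ∑ i, (M i : Multiset G) ≤ S := by
      rw [Fin.sum_univ_succ, hS', add_comm]
      simpa [M] using hl
    have hM : ∀ i, q ∣ (M i).length ∧ 0 < (M i).length ∧
        QuotientGroup.mk' K (M i).prod = 1 := by
      intro i
      refine Fin.cases ?_ ?_ i
      · refine ⟨?_, ?_, ?_⟩
        · simpa [M, hlen] using hTd
        · simpa [M, hlen, Multiset.card_pos] using Multiset.card_pos.2 hT0
        · simpa [M] using hl1
      · intro j
        have := hL' j
        exact ⟨by simp [M, this.1], by simp [M, this.1, hq], by simpa [M] using this.2⟩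
    choose c hc using fun i => (hM i).1
    have hex : ∀ i, ∃ e f : ℤ, (M i).prod = u ^ e * v ^ f := fun i =>
      hK _ ((QuotientGroup.eq_one_iff _).1 (hM i).2.2)
    choose e f hef using hex
    obtain ⟨I, hI, he, hf, hcs⟩ := davenport3 (fun i => (e i : ZMod p))
      (fun i => (f i : ZMod p)) (fun i => (c i : ZMod p)) (by rw [Fintype.card_fin]; omega)
    have hcardT : Multiset.card (∑ i ∈ I, (M i : Multiset G)) = q * ∑ i ∈ I, c i := by
      rw [Multiset.card_sum, mul_sum]
      exact sum_congr rfl fun i _ => by rw [Multiset.coe_card, hc]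
    refine ⟨∑ i ∈ I, (M i : Multiset G), ?_, ?_, ?_, assemble' huv hu hv M e f hef I he hf⟩
    · exact (sum_le_sum_of_subset (subset_univ I)).trans hMS
    · rw [← Multiset.card_pos, Multiset.card_sum]
      exact sum_pos (fun i _ => by simpa using (hM i).2.1) hI
    · rw [hcardT, hpq, mul_comm p q]
      refine mul_dvd_mul_left q ((ZMod.natCast_eq_zero_iff _ _).1 ?_)
      push_cast
      exact hcs
  · obtain rfl : m = 1 := by omega
    obtain ⟨T, h1, h2, h3⟩ := po_singleton hG S hS
    exact ⟨T, h1, by rintro rfl; simp at h2, one_dvd _, h3⟩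

lemma good_semidirect (m : ℕ) (hm : 0 < m)
    (φ : Multiplicative (ZMod m) →* MulAut (Multiplicative (ZMod m))) :
    Good m (Multiplicative (ZMod m) ⋊[φ] Multiplicative (ZMod m)) := by
  have : NeZero m := ⟨hm.ne'⟩
  let g : Multiplicative (ZMod m) := Multiplicative.ofAdd 1
  have hg : ∀ z : Multiplicative (ZMod m), z = g ^ (Multiplicative.toAdd z).val := by
    intro z
    rw [← ofAdd_nsmul]
    simp
  have hgm : g ^ m = 1 := by
    rw [← ofAdd_nsmul]
    simp
  clear_value g
  refine ⟨SemidirectProduct.inl g, SemidirectProduct.inr g,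
    (Multiplicative.toAdd (φ g g)).val, ?_, ?_, ?_, ?_⟩
  · rw [← map_pow, hgm, map_one]
  · rw [← map_pow, hgm, map_one]
  · rw [← map_pow, ← hg, SemidirectProduct.inl_aut, SemiconjBy]
    simp
  · intro z
    refine ⟨(Multiplicative.toAdd z.left).val, (Multiplicative.toAdd z.right).val, ?_⟩
    rw [← map_pow, ← map_pow, ← hg, ← hg, SemidirectProduct.inl_left_mul_inr_right]

end POne

/-- Every sequence of length `3m − 2` over `C_m ⋉_φ C_m` contains a nonempty
product-one subsequence whose length is divisible by `m`. -/
theorem product_one_subseq_dvd_m (m : ℕ) (hm : 0 < m)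
    (φ : Multiplicative (ZMod m) →* MulAut (Multiplicative (ZMod m)))
    (S : Multiset (Multiplicative (ZMod m) ⋊[φ] Multiplicative (ZMod m)))
    (hS : Multiset.card S = 3 * m - 2) :
    ∃ T ≤ S, T ≠ 0 ∧ m ∣ Multiset.card T ∧ IsProductOne T := by
  exact POne.main_of_good m hm _ (POne.good_semidirect m hm φ) S hS.ge
end

section
/- Let G ≅ C_m ⋉_φ C_{mn} for positive integers m, n. Then every sequence S over G of length |S| = 2m + mn − 2 contains a nonempty product-one subsequence T of length |T| ∈ [1, mn]. -/
open scoped List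

open MvPolynomial in
/-- Olson bound for `C_p^k` via Chevalley–Warning. -/
lemma davenport_prime {ι : Type*} {p : ℕ} [Fact p.Prime] (k : ℕ) (s : Finset ι)
    (a : Fin k → ι → ZMod p) (hs : k * (p - 1) < s.card) :
    ∃ t ⊆ s, t.Nonempty ∧ ∀ j, ∑ i ∈ t, a j i = 0 := by
  classical
  have hp : p.Prime := Fact.out
  have hp1 : p - 1 ≠ 0 := by have := hp.two_le; omega
  let f : Fin k → MvPolynomial s (ZMod p) := fun j => ∑ i : s, a j i • X i ^ (p - 1)
  have hdeg : (∑ j, (f j).totalDegree) < Fintype.card s := by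
    calc (∑ j, (f j).totalDegree) ≤ ∑ j : Fin k, (p - 1) := by
          apply Finset.sum_le_sum
          intro j _
          apply totalDegree_finsetSum_le
          rintro i _
          exact (totalDegree_smul_le ..).trans (totalDegree_X_pow ..).le
      _ = k * (p - 1) := by simp
      _ < _ := by simpa using hs
  have hdvd := char_dvd_card_solutions_of_fintype_sum_lt p hdeg
  let zero_sol : {x : s → ZMod p // ∀ j, eval x (f j) = 0} :=
    ⟨0, by intro j; simp [f, hp1]⟩
  have hN₀ : 0 < Fintype.card {x : s → ZMod p // ∀ j, eval x (f j) = 0} :=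
    @Fintype.card_pos _ _ ⟨zero_sol⟩
  obtain ⟨x, hx⟩ := Fintype.exists_ne_of_one_lt_card (hp.one_lt.trans_le <|
    Nat.le_of_dvd hN₀ (by convert! hdvd)) zero_sol
  refine ⟨({a | x.1 a ≠ 0} : Finset _).map ⟨(↑), Subtype.val_injective⟩, ?_, ?_, ?_⟩
  · simp +contextual [Finset.subset_iff]
  · rw [Finset.map_nonempty]
    rw [← Subtype.coe_ne_coe, Function.ne_iff] at hx
    obtain ⟨i, hi⟩ := hx
    exact ⟨i, by simpa [zero_sol] using hi⟩
  · intro j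
    have := x.2 j
    simpa [f, ZMod.pow_card_sub_one, Finset.sum_filter] using this

/-- `η(C_p ⊕ C_p) ≤ 3p - 2`. -/
lemma eta_prime {ι : Type*} {p : ℕ} [Fact p.Prime] (s : Finset ι)
    (a b : ι → ZMod p) (hs : 3 * p - 2 ≤ s.card) :
    ∃ t ⊆ s, t.Nonempty ∧ t.card ≤ p ∧ ∑ i ∈ t, a i = 0 ∧ ∑ i ∈ t, b i = 0 := by
  classical
  have hp : p.Prime := Fact.out
  have hp2 := hp.two_le
  obtain ⟨s', hs's, hs'⟩ := Finset.exists_subset_card_eq hs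
  obtain ⟨t, hts, htn, ht⟩ := davenport_prime 3 s' ![a, b, fun _ => 1] (by omega)
  have h0 : ∑ i ∈ t, a i = 0 := ht 0
  have h1 : ∑ i ∈ t, b i = 0 := ht 1
  have h2 : p ∣ t.card := by
    have : ∑ i ∈ t, (1 : ZMod p) = 0 := ht 2
    rw [← CharP.cast_eq_zero_iff (ZMod p)]
    simpa using this
  have hcard : t.card ≤ 3 * p - 2 := hs' ▸ Finset.card_le_card hts
  by_cases hle : t.card ≤ p
  · exact ⟨t, hts.trans hs's, htn, hle, h0, h1⟩
  have h2p : t.card = 2 * p := by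
    obtain ⟨c, hc⟩ := h2
    have : c < 3 := by
      by_contra h
      have : p * 3 ≤ p * c := Nat.mul_le_mul_left _ (by omega)
      omega
    have : 1 < c := by
      by_contra h
      have : p * c ≤ p * 1 := Nat.mul_le_mul_left _ (by omega)
      omega
    obtain rfl : c = 2 := by omega
    omega
  obtain ⟨t', ht't, ht'⟩ := Finset.exists_subset_card_eq (show 2 * p - 1 ≤ t.card by omega)
  obtain ⟨u, hut, hun, hu⟩ := davenport_prime 2 t' ![a, b] (by omega)
  have g0 : ∑ i ∈ u, a i = 0 := hu 0
  have g1 : ∑ i ∈ u, b i = 0 := hu 1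
  have hu' : u ⊆ t := hut.trans ht't
  have hucard : u.card ≤ 2 * p - 1 := ht' ▸ Finset.card_le_card hut
  by_cases hle' : u.card ≤ p
  · exact ⟨u, (hu'.trans hts).trans hs's, hun, hle', g0, g1⟩
  have hsd := Finset.card_sdiff_of_subset hu'
  refine ⟨t \ u, (Finset.sdiff_subset.trans hts).trans hs's, ?_, by omega, ?_, ?_⟩
  · rw [← Finset.card_pos]; omega
  · have := Finset.sum_sdiff (f := a) hu'
    rw [g0, h0] at this; simpa using this
  · have := Finset.sum_sdiff (f := b) hu'
    rw [g1, h1] at this; simpa using this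

/-- List version of `eta_prime`. -/
lemma eta_prime_list {p : ℕ} (hp : p.Prime) (L : List (ℤ × ℕ)) (hL : 3 * p - 2 ≤ L.length) :
    ∃ l, l <+~ L ∧ l ≠ [] ∧ l.length ≤ p ∧ (p : ℤ) ∣ (l.map Prod.fst).sum ∧
      p ∣ (l.map Prod.snd).sum := by
  have : Fact p.Prime := ⟨hp⟩
  obtain ⟨t, -, htn, htp, h1, h2⟩ := eta_prime (p := p) (Finset.univ : Finset (Fin L.length))
    (fun i => ((L.get i).1 : ZMod p)) (fun i => ((L.get i).2 : ZMod p)) (by simpa using hL)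
  refine ⟨t.toList.map L.get, ?_, ?_, by simpa using htp, ?_, ?_⟩
  · rw [← Multiset.coe_le, ← Multiset.map_coe, Finset.coe_toList]
    have h : t.val.map L.get ≤ (Finset.univ : Finset (Fin L.length)).val.map L.get :=
      Multiset.map_le_map (Finset.val_le_iff.2 (Finset.subset_univ t))
    refine h.trans (le_of_eq ?_)
    rw [Fin.univ_val_map]
    simp
  · simpa using htn.ne_empty
  · rw [← ZMod.intCast_zmod_eq_zero_iff_dvd, List.map_map, Finset.sum_map_toList]
    simpa using h1
  · rw [← CharP.cast_eq_zero_iff (ZMod p), List.map_map, Finset.sum_map_toList]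
    simpa using h2

/-- Product of a list of pairs `(a, b) ~ x^a y^b`, where `y x y⁻¹ = x^r`. -/
def evProd (r : ℕ) : List (ℤ × ℕ) → ℤ × ℕ
  | [] => (0, 0)
  | g :: l => (g.1 + (r : ℤ) ^ g.2 * (evProd r l).1, g.2 + (evProd r l).2)

lemma evProd_append (r : ℕ) (l₁ l₂ : List (ℤ × ℕ)) :
    evProd r (l₁ ++ l₂) = ((evProd r l₁).1 + (r : ℤ) ^ (evProd r l₁).2 * (evProd r l₂).1,
      (evProd r l₁).2 + (evProd r l₂).2) := by
  induction l₁ with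
  | nil => simp [evProd]
  | cons g l ih =>
    simp only [List.cons_append, evProd, ih]
    ext
    · simp only; ring
    · simp only; ring

lemma evProd_snd (r : ℕ) (l : List (ℤ × ℕ)) : (evProd r l).2 = (l.map Prod.snd).sum := by
  induction l with
  | nil => simp [evProd]
  | cons g l ih => simp [evProd, ih]

lemma evProd_fst (r q : ℕ) (hr : r ≡ 1 [MOD q]) (l : List (ℤ × ℕ)) :
    (evProd r l).1 ≡ (l.map Prod.fst).sum [ZMOD q] := by
  have hr' : (r : ℤ) ≡ 1 [ZMOD q] := by exact_mod_cast (Int.natCast_modEq_iff.2 hr)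
  induction l with
  | nil => simp [evProd]
  | cons g l ih =>
    simp only [evProd, List.map_cons, List.sum_cons]
    refine Int.ModEq.add_left _ ?_
    simpa using (hr'.pow g.2).mul ih

/-- Extraction of blocks. -/
lemma extract_blocks {p : ℕ} (hp : p.Prime) (k : ℕ) (L : List (ℤ × ℕ))
    (hL : p * (k + 2) - 2 ≤ L.length) :
    ∃ bs : List (List (ℤ × ℕ)), bs.length = k ∧ bs.flatten <+~ L ∧
      ∀ l ∈ bs, l ≠ [] ∧ l.length ≤ p ∧ (p : ℤ) ∣ (l.map Prod.fst).sum ∧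
      p ∣ (l.map Prod.snd).sum := by
  have hp2 := hp.two_le
  induction k generalizing L with
  | zero => exact ⟨[], by simp⟩
  | succ k ih =>
    have e : p * (k + 1 + 2) = p * k + 3 * p := by ring
    have e' : p * (k + 2) = p * k + 2 * p := by ring
    obtain ⟨l, hl, hl0, hlp, h1, h2⟩ := eta_prime_list hp L (by omega)
    have hle : (l : Multiset (ℤ × ℕ)) ≤ L := Multiset.coe_le.2 hl
    obtain ⟨M, hM⟩ := Multiset.le_iff_exists_add.1 hle
    have hL' : L ~ l ++ M.toList := by
      rw [← Multiset.coe_eq_coe, ← Multiset.coe_add, Multiset.coe_toList, hM]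
    generalize M.toList = L' at hL'
    have hlen := hL'.length_eq
    rw [List.length_append] at hlen
    obtain ⟨bs, hk, hsub, hb⟩ := ih L' (by omega)
    refine ⟨l :: bs, by simp [hk], ?_, ?_⟩
    · rw [List.flatten_cons]
      exact ((List.subperm_append_left l).2 hsub).trans hL'.symm.subperm
    · intro x hx
      rcases List.mem_cons.1 hx with rfl | hx
      · exact ⟨hl0, hlp, h1, h2⟩
      · exact hb x hx

lemma subperm_map_lift {α β : Type*} (f : α → β) {l : List β} {L : List α}
    (h : l <+~ L.map f) : ∃ l₀, l₀ <+~ L ∧ l₀.map f = l := by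
  obtain ⟨l', hl', hs⟩ := h
  obtain ⟨l₁, hl₁, rfl⟩ := List.sublist_map_iff.1 hs
  have h2 : Relation.Comp (· = List.map f ·) (· ~ ·) l l₁ := by
    rw [List.eq_map_comp_perm]; exact hl'.symm
  obtain ⟨l₂, h3, h4⟩ := h2
  exact ⟨l₂, h4.subperm.trans hl₁.subperm, h3.symm⟩

lemma flatten_subperm {α : Type*} {l L : List (List α)} (h : l <+~ L) :
    l.flatten <+~ L.flatten := by
  obtain ⟨l', hl', hs⟩ := h
  exact hl'.symm.flatten.subperm.trans hs.flatten.subperm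

lemma evProd_flatten (r p : ℕ) (bs : List (List (ℤ × ℕ)))
    (h : ∀ l ∈ bs, (p : ℤ) ∣ (evProd r l).1 ∧ p ∣ (evProd r l).2) :
    (evProd r bs.flatten).1 =
      p * (evProd (r ^ p) (bs.map fun l => ((evProd r l).1 / p, (evProd r l).2 / p))).1 ∧
    (evProd r bs.flatten).2 =
      p * (evProd (r ^ p) (bs.map fun l => ((evProd r l).1 / p, (evProd r l).2 / p))).2 := by
  induction bs with
  | nil => simp [evProd]
  | cons l bs ih =>
    obtain ⟨i1, i2⟩ := ih (fun x hx => h x (List.mem_cons_of_mem _ hx))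
    obtain ⟨h1, h2⟩ := h l List.mem_cons_self
    rw [List.flatten_cons, evProd_append]
    simp only [List.map_cons, evProd, i1, i2]
    rw [mul_add, mul_add, Int.mul_ediv_cancel' h1, Nat.mul_div_cancel' h2]
    refine ⟨?_, rfl⟩
    push_cast
    rw [← pow_mul, Nat.mul_div_cancel' h2]
    ring

/-- Base case: `D(C_n) ≤ n`. -/
lemma davenport_cyclic (n : ℕ) (hn : 0 < n) (L : List (ℤ × ℕ)) (hL : L.length = n) :
    ∃ l, l <+~ L ∧ l ≠ [] ∧ (n : ℤ) ∣ (l.map Prod.fst).sum := by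
  have : NeZero n := ⟨hn.ne'⟩
  let F : Fin (n + 1) → ZMod n := fun i => ((((L.take i).map Prod.fst).sum : ℤ) : ZMod n)
  have key : ∀ i j : Fin (n + 1), i < j → F i = F j →
      ∃ l, l <+~ L ∧ l ≠ [] ∧ (n : ℤ) ∣ (l.map Prod.fst).sum := by
    intro i j hij hF
    have hij' : (i : ℕ) < j := hij
    have hj := j.2
    refine ⟨(L.take j).drop i, ?_, ?_, ?_⟩
    · exact ((List.drop_sublist _ _).trans (List.take_sublist _ _)).subperm
    · rw [← List.length_pos_iff]; simp; omega
    · have e : (L.take j) = L.take i ++ (L.take j).drop i := by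
        conv_lhs => rw [← List.take_append_drop i (L.take j)]
        rw [List.take_take, min_eq_left hij'.le]
      rw [← ZMod.intCast_zmod_eq_zero_iff_dvd]
      simp only [F] at hF
      rw [e, List.map_append, List.sum_append] at hF
      push_cast at hF
      simpa using hF
  obtain ⟨i, j, hne, hF⟩ := Fintype.exists_ne_map_eq_of_card_lt F (by simp [ZMod.card])
  rcases lt_or_gt_of_ne hne with h | h
  · exact key i j h hF
  · exact key j i h hF.symm

lemma modEq_one_of_minFac {m n r : ℕ} (hm : 1 < m) (hr : r ^ m ≡ 1 [MOD m * n]) :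
    r ≡ 1 [MOD m.minFac] := by
  have hp : m.minFac.Prime := Nat.minFac_prime (by omega)
  set p := m.minFac with hpdef
  have : Fact p.Prime := ⟨hp⟩
  have h1 : r ^ m ≡ 1 [MOD p] := hr.of_dvd ((Nat.minFac_dvd m).mul_right n)
  have h2 : (r : ZMod p) ^ m = 1 := by
    have := (ZMod.natCast_eq_natCast_iff _ _ _).2 h1
    simpa using this
  have h0 : (r : ZMod p) ≠ 0 := by
    intro h; rw [h, zero_pow (by omega)] at h2; exact zero_ne_one h2
  have h3 : (r : ZMod p) ^ (p - 1) = 1 := ZMod.pow_card_sub_one_eq_one h0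
  have hcop : Nat.Coprime m (p - 1) := by
    by_contra hc
    obtain ⟨q, hq, hqm, hqp⟩ := Nat.Prime.not_coprime_iff_dvd.1 hc
    have : p ≤ q := Nat.minFac_le_of_dvd hq.two_le hqm
    have := Nat.le_of_dvd (by have := hp.two_le; omega) hqp
    have := hp.two_le
    omega
  have h4 : orderOf (r : ZMod p) ∣ 1 := by
    rw [← hcop]
    exact Nat.dvd_gcd (orderOf_dvd_of_pow_eq_one h2) (orderOf_dvd_of_pow_eq_one h3)
  have h5 : (r : ZMod p) = 1 := orderOf_eq_one_iff.1 (Nat.dvd_one.1 h4)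
  rw [← ZMod.natCast_eq_natCast_iff]
  simpa using h5

lemma main_pairs (n : ℕ) (hn : 0 < n) (m : ℕ) : 0 < m → ∀ (r : ℕ), r ^ m ≡ 1 [MOD m * n] →
    ∀ L : List (ℤ × ℕ), L.length = 2 * m + m * n - 2 →
    ∃ l, l <+~ L ∧ l ≠ [] ∧ l.length ≤ m * n ∧ ((m * n : ℕ) : ℤ) ∣ (evProd r l).1 ∧
      m ∣ (evProd r l).2 := by
  induction m using Nat.strong_induction_on with
  | _ m ih =>
  intro hm r hr L hL
  by_cases hm1 : m = 1
  · subst hm1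
    obtain ⟨l, hl, hl0, hd⟩ := davenport_cyclic n hn L (by omega)
    refine ⟨l, hl, hl0, ?_, ?_, one_dvd _⟩
    · have := hl.length_le; omega
    · rw [pow_one, one_mul] at hr
      rw [one_mul]
      exact (evProd_fst r n hr l).dvd_iff.2 hd
  have hm2 : 1 < m := by omega
  have hrp := modEq_one_of_minFac hm2 hr
  have hp : m.minFac.Prime := Nat.minFac_prime (by omega)
  obtain ⟨m', hm'⟩ := Nat.minFac_dvd m
  set p := m.minFac with hpdef
  have hm'0 : 0 < m' := by
    rcases Nat.eq_zero_or_pos m' with h | h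
    · subst h; omega
    · exact h
  have hm'lt : m' < m := by
    rw [hm']; exact lt_mul_of_one_lt_left hm'0 hp.one_lt
  have hmn' : 0 < m' * n := Nat.mul_pos hm'0 hn
  obtain ⟨bs, hbl, hbs, hb⟩ := extract_blocks hp (2 * m' + m' * n - 2) L (by
    rw [hL, hm', Nat.sub_add_cancel (by omega)]
    apply le_of_eq; congr 1; ring)
  have hdiv : ∀ l ∈ bs, (p : ℤ) ∣ (evProd r l).1 ∧ p ∣ (evProd r l).2 := by
    intro l hl
    obtain ⟨-, -, h1, h2⟩ := hb l hl
    exact ⟨(evProd_fst r p hrp l).dvd_iff.2 h1, by rwa [evProd_snd]⟩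
  obtain ⟨l', hl', hl'0, hl'len, hd1, hd2⟩ := ih m' hm'lt hm'0 (r ^ p) (by
      rw [← pow_mul, ← hm']
      exact hr.of_dvd (Nat.mul_dvd_mul_right ⟨p, by rw [hm', mul_comm]⟩ n))
    (bs.map fun l => ((evProd r l).1 / p, (evProd r l).2 / p)) (by simp [hbl])
  obtain ⟨cs, hcs, rfl⟩ := subperm_map_lift _ hl'
  have hcs' : ∀ l ∈ cs, l ∈ bs := fun l hl => hcs.subset hl
  obtain ⟨e1, e2⟩ := evProd_flatten r p cs (fun l hl => hdiv l (hcs' l hl))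
  refine ⟨cs.flatten, (flatten_subperm hcs).trans hbs, ?_, ?_, ?_, ?_⟩
  · intro h
    rw [List.flatten_eq_nil_iff] at h
    cases cs with
    | nil => simp at hl'0
    | cons c cs =>
      exact (hb c (hcs' c List.mem_cons_self)).1 (h c List.mem_cons_self)
  · rw [List.length_flatten]
    have := List.sum_le_card_nsmul (cs.map List.length) p (by
      intro x hx
      obtain ⟨l, hl, rfl⟩ := List.mem_map.1 hx
      exact (hb l (hcs' l hl)).2.1)
    rw [List.length_map] at this hl'len
    calc _ ≤ cs.length * p := by simpa using this
      _ ≤ (m' * n) * p := Nat.mul_le_mul_right _ hl'len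
      _ = m * n := by rw [hm']; ring
  · rw [e1]
    have : ((m * n : ℕ) : ℤ) = p * ((m' * n : ℕ) : ℤ) := by
      rw [hm']; push_cast; ring
    rw [this]
    exact mul_dvd_mul_left _ hd1
  · rw [e2]
    conv_lhs => rw [hm']
    exact Nat.mul_dvd_mul_left _ hd2

/-- Every element of the automorphism group acts by multiplication by `r ^ b`. -/
lemma action_eq (m N : ℕ) [NeZero N]
    (φ : Multiplicative (ZMod m) →* MulAut (Multiplicative (ZMod N))) (b : ℕ) (a : ZMod N) :
    (φ (Multiplicative.ofAdd (b : ZMod m)) (Multiplicative.ofAdd a)).toAdd =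
      ((φ (Multiplicative.ofAdd (1 : ZMod m)) (Multiplicative.ofAdd (1 : ZMod N))).toAdd) ^ b
        * a := by
  set c := (φ (Multiplicative.ofAdd (1 : ZMod m)) (Multiplicative.ofAdd (1 : ZMod N))).toAdd
    with hc
  have h1 : ∀ a : ZMod N, φ (Multiplicative.ofAdd (1 : ZMod m)) (Multiplicative.ofAdd a) =
      Multiplicative.ofAdd (c * a) := by
    intro a
    obtain ⟨k, rfl⟩ := ZMod.natCast_zmod_surjective a
    have : Multiplicative.ofAdd (k : ZMod N) = (Multiplicative.ofAdd (1 : ZMod N)) ^ k := by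
      rw [← ofAdd_nsmul]; simp
    rw [this, map_pow]
    apply Multiplicative.toAdd.injective
    rw [toAdd_pow, ← hc, toAdd_ofAdd, nsmul_eq_mul, mul_comm]
  induction b generalizing a with
  | zero => simp
  | succ b ih =>
    rw [Nat.cast_succ, ofAdd_add, map_mul, MulAut.mul_apply, h1, ih, pow_succ]
    ring

lemma list_prod_eq (m N : ℕ) [NeZero N] [NeZero m]
    (φ : Multiplicative (ZMod m) →* MulAut (Multiplicative (ZMod N))) (r : ℕ)
    (hr : (r : ZMod N) =
      (φ (Multiplicative.ofAdd (1 : ZMod m)) (Multiplicative.ofAdd (1 : ZMod N))).toAdd)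
    (l : List (Multiplicative (ZMod N) ⋊[φ] Multiplicative (ZMod m))) :
    l.prod.left.toAdd = ((evProd r (l.map fun g =>
        ((g.left.toAdd.val : ℤ), g.right.toAdd.val))).1 : ZMod N) ∧
    l.prod.right.toAdd = ((evProd r (l.map fun g =>
        ((g.left.toAdd.val : ℤ), g.right.toAdd.val))).2 : ZMod m) := by
  induction l with
  | nil => simp [evProd]
  | cons g l ih =>
    obtain ⟨i1, i2⟩ := ih
    simp only [List.prod_cons, List.map_cons, evProd, SemidirectProduct.mul_left,
      SemidirectProduct.mul_right, toAdd_mul, i2]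
    constructor
    · have := action_eq m N φ g.right.toAdd.val l.prod.left.toAdd
      rw [ZMod.natCast_zmod_val, ofAdd_toAdd, ofAdd_toAdd] at this
      rw [this, ← hr, i1]
      push_cast
      rw [ZMod.natCast_zmod_val]
    · push_cast
      rw [ZMod.natCast_zmod_val]

/-- Every sequence of length `2m + mn − 2` over `C_m ⋉_φ C_{mn}` contains a
nonempty product-one subsequence of length in `[1, mn]`. -/
theorem product_one_subseq_le_mn (m n : ℕ) (hm : 0 < m) (hn : 0 < n)
    (φ : Multiplicative (ZMod m) →* MulAut (Multiplicative (ZMod (m * n))))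
    (S : Multiset (Multiplicative (ZMod (m * n)) ⋊[φ] Multiplicative (ZMod m)))
    (hS : Multiset.card S = 2 * m + m * n - 2) :
    ∃ T ≤ S, T ≠ 0 ∧ Multiset.card T ≤ m * n ∧ IsProductOne T := by
  have : NeZero m := ⟨hm.ne'⟩
  have : NeZero (m * n) := ⟨(Nat.mul_pos hm hn).ne'⟩
  obtain ⟨r, hr⟩ := ZMod.natCast_zmod_surjective
    (φ (Multiplicative.ofAdd (1 : ZMod m)) (Multiplicative.ofAdd (1 : ZMod (m * n)))).toAdd
  have hrm : r ^ m ≡ 1 [MOD m * n] := by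
    have := action_eq m (m * n) φ m 1
    rw [← ZMod.natCast_eq_natCast_iff]
    rw [← hr] at this
    simpa using this.symm
  induction S using Quotient.inductionOn with
  | _ L =>
  obtain ⟨l', hl', h0, hlen, h1, h2⟩ := main_pairs n hn m hm r hrm
    (L.map fun g => ((g.left.toAdd.val : ℤ), g.right.toAdd.val)) (by simpa using hS)
  obtain ⟨l, hl, rfl⟩ := subperm_map_lift _ hl'
  obtain ⟨e1, e2⟩ := list_prod_eq m (m * n) φ r hr l
  refine ⟨(l : Multiset _), Multiset.coe_le.2 hl, ?_, by simpa using hlen, l, rfl, ?_⟩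
  · simpa using h0
  · rw [(ZMod.intCast_zmod_eq_zero_iff_dvd _ _).2 h1] at e1
    rw [(ZMod.natCast_eq_zero_iff _ _).2 h2] at e2
    apply SemidirectProduct.ext
    · exact Multiplicative.toAdd.injective e1
    · exact Multiplicative.toAdd.injective e2
end

section
/- Let G ≅ C_m ⋉_φ C_{mn} for positive integers m, n. Then every sequence S over G of length |S| = 2m + 2mn − 3 contains a product-one subsequence T of length exactly mn. -/
section Kemnitz
open Finset

lemma kz_alt {ι R : Type*} [DecidableEq ι] [CommRing R] (L : List (R × (ι → R))) :
    ∀ (A J : Finset ι), Disjoint A J → L.length < #J →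
    ∑ T ∈ J.powerset, (-1 : R) ^ #T * (L.map fun q => q.1 + ∑ j ∈ A ∪ T, q.2 j).prod = 0 := by
  induction L with
  | nil =>
    intro A J _ h
    have hJ : J.Nonempty := by
      rw [← Finset.card_pos]; simpa using h
    have h1 := Finset.sum_powerset_neg_one_pow_card_of_nonempty hJ
    have h2 := congrArg (Int.cast : ℤ → R) h1
    simpa using h2
  | cons q L ih =>
    intro A J hAJ h
    simp only [List.map_cons, List.prod_cons, List.length_cons] at h ⊢
    set g : Finset ι → R := fun T => (L.map fun q => q.1 + ∑ j ∈ T, q.2 j).prod with hg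
    have e1 : ∀ T ∈ J.powerset, (-1 : R) ^ #T * ((q.1 + ∑ j ∈ A ∪ T, q.2 j) * g (A ∪ T))
        = (q.1 + ∑ j ∈ A, q.2 j) * ((-1 : R) ^ #T * g (A ∪ T))
          + ∑ j ∈ J, if j ∈ T then q.2 j * ((-1 : R) ^ #T * g (A ∪ T)) else 0 := by
      intro T hT
      rw [mem_powerset] at hT
      rw [sum_union (hAJ.mono_right hT), ← sum_filter, ← sum_mul, filter_mem_eq_inter,
        inter_eq_right.2 hT]
      ring
    rw [sum_congr rfl e1, sum_add_distrib, ← mul_sum, ih A J hAJ (by omega), mul_zero, zero_add,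
      sum_comm]
    refine sum_eq_zero fun j hj => ?_
    have e2 := ih (insert j A) (J.erase j) (by
      rw [disjoint_insert_left]
      exact ⟨notMem_erase _ _, hAJ.mono_right (erase_subset _ _)⟩) (by
        rw [card_erase_of_mem hj]; omega)
    conv_lhs => rw [← insert_erase hj]
    rw [sum_powerset_insert (notMem_erase _ _)]
    have e3 : ∀ T ∈ (J.erase j).powerset,
        (if j ∈ T then q.2 j * ((-1 : R) ^ #T * g (A ∪ T)) else 0) = 0 := by
      intro T hT
      rw [if_neg]
      intro h'
      exact notMem_erase _ _ (mem_powerset.1 hT h')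
    have e4 : ∀ T ∈ (J.erase j).powerset,
        (if j ∈ insert j T then q.2 j * ((-1 : R) ^ #(insert j T) * g (A ∪ insert j T)) else 0)
          = (- q.2 j) * ((-1 : R) ^ #T * g (insert j A ∪ T)) := by
      intro T hT
      have : j ∉ T := fun h' => notMem_erase _ _ (mem_powerset.1 hT h')
      rw [if_pos (mem_insert_self _ _), card_insert_of_notMem this, union_insert, insert_union]
      ring
    rw [sum_eq_zero e3, sum_congr rfl e4, ← mul_sum, e2]
    simp

section
variable {ι : Type*} [DecidableEq ι] {p : ℕ} [Fact p.Prime]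

lemma kz_core (v : ι → ZMod p × ZMod p) (J : Finset ι) (hJ : 3 * p - 2 ≤ #J) :
    ∑ T ∈ J.powerset with (p ∣ #T ∧ ∑ i ∈ T, v i = 0), (-1 : ZMod p) ^ #T = 0 := by
  have hp := (Fact.out : p.Prime).two_le
  set U : Finset (ZMod p) := univ.erase 0 with hU
  set k : ZMod p := ∏ c ∈ U, (-c) with hk
  have hk0 : k ≠ 0 := prod_ne_zero_iff.2 fun c hc => neg_ne_zero.2 (ne_of_mem_erase hc)
  have hind : ∀ s : ZMod p, ∏ c ∈ U, (-c + s) = if s = 0 then k else 0 := by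
    intro s
    split_ifs with h
    · simp [h, hk]
    · exact prod_eq_zero (i := s) (by simp [hU, h]) (by simp)
  let F : (ι → ZMod p) → List (ZMod p × (ι → ZMod p)) := fun f => U.toList.map fun c => (-c, f)
  have hF : ∀ f T, ((F f).map fun q => q.1 + ∑ j ∈ T, q.2 j).prod
      = if ∑ j ∈ T, f j = 0 then k else 0 := by
    intro f T
    rw [← hind, ← Finset.prod_map_toList]
    simp [F, Function.comp_def]
  have hlen : ∀ f, (F f).length = p - 1 := by
    intro f
    simp [F, hU, card_erase_of_mem]
  have h := kz_alt (F (fun _ => 1) ++ (F (fun i => (v i).1) ++ F (fun i => (v i).2))) ∅ J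
    (disjoint_empty_left _) (by simp only [List.length_append, hlen]; omega)
  simp only [List.map_append, List.prod_append, hF, empty_union] at h
  rw [sum_filter]
  have : ∀ T ∈ J.powerset, (-1 : ZMod p) ^ #T * ((if ∑ j ∈ T, (1 : ZMod p) = 0 then k else 0) *
      ((if ∑ j ∈ T, (v j).1 = 0 then k else 0) * (if ∑ j ∈ T, (v j).2 = 0 then k else 0)))
      = k ^ 3 * (if p ∣ #T ∧ ∑ i ∈ T, v i = 0 then (-1 : ZMod p) ^ #T else 0) := by
    intro T _
    have h1 : (∑ j ∈ T, (1 : ZMod p) = 0) ↔ p ∣ #T := by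
      rw [← CharP.cast_eq_zero_iff (ZMod p)]; simp
    have h2 : (∑ i ∈ T, v i = 0) ↔ (∑ j ∈ T, (v j).1 = 0 ∧ ∑ j ∈ T, (v j).2 = 0) := by
      rw [Prod.ext_iff, Prod.fst_sum, Prod.snd_sum]; rfl
    simp only [h1, h2]
    by_cases a : p ∣ #T <;> by_cases b : ∑ j ∈ T, (v j).1 = 0 <;>
      by_cases c : ∑ j ∈ T, (v j).2 = 0 <;>
      simp only [a, b, c, and_true, and_false, if_true, if_false] <;> ring1
  rw [sum_congr rfl this, ← mul_sum] at h
  exact (mul_eq_zero.1 h).resolve_left (pow_ne_zero _ hk0)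

def kzN (v : ι → ZMod p × ZMod p) (J : Finset ι) (k : ℕ) : ℕ :=
  #{T ∈ J.powersetCard k | ∑ i ∈ T, v i = 0}

lemma kz_zero (v : ι → ZMod p × ZMod p) (J : Finset ι) : kzN v J 0 = 1 := by
  simp [kzN, filter_singleton]

lemma kz_big (v : ι → ZMod p × ZMod p) (J : Finset ι) (k : ℕ) (h : #J < k) : kzN v J k = 0 := by
  simp [kzN, powersetCard_eq_empty.2 h]

lemma kz_sum (hp2 : p ≠ 2) (v : ι → ZMod p × ZMod p) (J : Finset ι) (hJ : 3 * p - 2 ≤ #J)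
    (hJ' : #J < 4 * p) :
    1 - (kzN v J p : ZMod p) + kzN v J (2 * p) - kzN v J (3 * p) = 0 := by
  have hp := (Fact.out : p.Prime).two_le
  have hodd : Odd p := (Fact.out : p.Prime).odd_of_ne_two hp2
  have h := kz_core v J hJ
  have hmaps : ∀ T ∈ J.powerset.filter (fun T => p ∣ #T ∧ ∑ i ∈ T, v i = 0),
      #T / p ∈ range 4 := by
    intro T hT
    simp only [mem_filter, mem_powerset] at hT
    rw [mem_range]
    have := card_le_card hT.1
    exact Nat.div_lt_of_lt_mul (by omega)
  rw [← sum_fiberwise_of_maps_to hmaps] at h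
  have key : ∀ c : ℕ, ∑ T ∈ (J.powerset.filter (fun T => p ∣ #T ∧ ∑ i ∈ T, v i = 0)).filter
      (fun T => #T / p = c), (-1 : ZMod p) ^ #T = (-1) ^ c * kzN v J (c * p) := by
    intro c
    have : (J.powerset.filter (fun T => p ∣ #T ∧ ∑ i ∈ T, v i = 0)).filter
      (fun T => #T / p = c) = (J.powersetCard (c * p)).filter (fun T => ∑ i ∈ T, v i = 0) := by
      ext T
      simp only [mem_filter, mem_powerset, mem_powersetCard]
      constructor
      · rintro ⟨⟨h1, h2, h3⟩, rfl⟩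
        exact ⟨⟨h1, (Nat.div_mul_cancel h2).symm⟩, h3⟩
      · rintro ⟨⟨h1, h2⟩, h3⟩
        refine ⟨⟨h1, ⟨c, by rw [h2, mul_comm]⟩, h3⟩, ?_⟩
        rw [h2, Nat.mul_div_cancel _ (by omega)]
    rw [this, sum_congr rfl (g := fun _ => (-1 : ZMod p) ^ c), sum_const, kzN, nsmul_eq_mul,
      mul_comm]
    intro T hT
    simp only [mem_filter, mem_powersetCard] at hT
    rw [hT.1.2, mul_comm, pow_mul, hodd.neg_one_pow]
  simp only [key, sum_range_succ, sum_range_zero, zero_mul, kz_zero] at h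
  rw [← h]
  push_cast
  ring

lemma kz_insert (v : ι → ZMod p × ZMod p) (J : Finset ι) (z : ι) (hz : z ∉ J) (hvz : v z = 0)
    (k : ℕ) : kzN v (insert z J) (k + 1) = kzN v J (k + 1) + kzN v J k := by
  unfold kzN
  rw [powersetCard_succ_insert hz, filter_union, card_union_of_disjoint]
  · congr 1
    rw [filter_image, card_image_of_injOn]
    · congr 1
      apply filter_congr
      intro T hT
      rw [sum_insert (fun h => hz ((mem_powersetCard.1 hT).1 h)), hvz, zero_add]
    · intro T hT T' hT' hh
      simp only [coe_filter, mem_powersetCard, Set.mem_ofPred_eq] at hT hT'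
      have := congrArg (fun s => erase s z) hh
      simpa [erase_insert (fun h => hz (hT.1.1 h)), erase_insert (fun h => hz (hT'.1.1 h))] using this
  · rw [disjoint_left]
    intro T hT hT'
    simp only [mem_filter, mem_powersetCard, mem_image] at hT hT'
    obtain ⟨⟨U, hU, rfl⟩, _⟩ := hT'
    exact hz (hT.1.1 (mem_insert_self _ _))

lemma kz_sum' (hp2 : p ≠ 2) (v : ι → ZMod p × ZMod p) (J : Finset ι) (z : ι) (hz : z ∉ J)
    (hvz : v z = 0) (hJ : 3 * p - 3 ≤ #J) (hJ' : #J + 1 < 4 * p) :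
    1 - ((kzN v J p : ZMod p) + kzN v J (p - 1)) + (kzN v J (2 * p) + kzN v J (2 * p - 1))
      - (kzN v J (3 * p) + kzN v J (3 * p - 1)) = 0 := by
  have hp := (Fact.out : p.Prime).two_le
  have h := kz_sum hp2 v (insert z J) (by rw [card_insert_of_notMem hz]; omega)
    (by rw [card_insert_of_notMem hz]; omega)
  have e : ∀ k, 0 < k → kzN v (insert z J) k = kzN v J k + kzN v J (k - 1) := by
    intro k hk
    obtain ⟨k, rfl⟩ := Nat.exists_eq_add_of_lt hk
    simpa using kz_insert v J z hz hvz k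
  rw [e p (by omega), e (2 * p) (by omega), e (3 * p) (by omega)] at h
  rw [← h]
  push_cast
  ring

/-- Double counting. -/
lemma kz_double (v : ι → ZMod p × ZMod p) (J : Finset ι) (m k : ℕ) (hk : k ≤ m) :
    ∑ I ∈ J.powersetCard m, kzN v I k = (#J - k).choose (m - k) * kzN v J k := by
  have h1 : ∀ I ∈ J.powersetCard m, kzN v I k =
      #{T ∈ {T ∈ J.powersetCard k | ∑ i ∈ T, v i = 0} | T ⊆ I} := by
    intro I hI
    rw [mem_powersetCard] at hI
    unfold kzN
    congr 1
    ext T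
    simp only [mem_filter, mem_powersetCard]
    constructor
    · rintro ⟨⟨a, b⟩, c⟩; exact ⟨⟨⟨a.trans hI.1, b⟩, c⟩, a⟩
    · rintro ⟨⟨⟨a, b⟩, c⟩, d⟩; exact ⟨⟨d, b⟩, c⟩
  rw [sum_congr rfl h1]
  have h2 := sum_card_bipartiteAbove_eq_sum_card_bipartiteBelow (s := J.powersetCard m)
    (t := {T ∈ J.powersetCard k | ∑ i ∈ T, v i = 0}) (fun I T => T ⊆ I)
  unfold bipartiteAbove bipartiteBelow at h2
  rw [h2, sum_const_nat (m := (#J - k).choose (m - k)), kzN, mul_comm]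
  intro T hT
  simp only [mem_filter, mem_powersetCard] at hT
  obtain ⟨⟨hTJ, hTk⟩, -⟩ := hT
  rw [← hTk, ← card_sdiff_of_subset hTJ, hTk, ← card_powersetCard]
  refine card_bij' (fun I _ => I \ T) (fun I _ => I ∪ T) ?_ ?_ ?_ ?_
  · intro I hI
    simp only [mem_filter, mem_powersetCard] at hI ⊢
    exact ⟨sdiff_subset_sdiff hI.1.1 le_rfl, by rw [card_sdiff_of_subset hI.2, hI.1.2, hTk]⟩
  · intro I hI
    simp only [mem_filter, mem_powersetCard] at hI ⊢
    have hd : Disjoint I T := disjoint_sdiff_self_left.mono_left hI.1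
    refine ⟨⟨union_subset (hI.1.trans sdiff_subset) hTJ, ?_⟩, subset_union_right⟩
    rw [card_union_of_disjoint hd, hI.2, hTk]; omega
  · intro I hI
    simp only [mem_filter, mem_powersetCard] at hI
    exact sdiff_union_of_subset hI.2
  · intro I hI
    simp only [mem_powersetCard] at hI
    have hd : Disjoint I T := disjoint_sdiff_self_left.mono_left hI.1
    exact union_sdiff_cancel_right hd

lemma kz_choose (n c : ℕ) (h1 : c * p ≤ n) (h2 : n < (c + 1) * p) :
    ((n.choose p : ℕ) : ZMod p) = c := by
  have h := (Choose.choose_modEq_choose_mod_mul_choose_div_nat (n := n) (k := p) (p := p))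
  have hp := (Fact.out : p.Prime).pos
  have : n / p = c := Nat.div_eq_of_lt_le h1 h2
  rw [Nat.mod_self, Nat.div_self hp, this, Nat.choose_zero_right, Nat.choose_one_right, one_mul] at h
  exact (ZMod.natCast_eq_natCast_iff _ _ _).2 h

lemma kz_three (hp2 : p ≠ 2) (v : ι → ZMod p × ZMod p) (J : Finset ι) (z : ι) (hz : z ∉ J)
    (hvz : v z = 0) (hJ : #J = 4 * p - 3) :
    3 - 2 * ((kzN v J p : ZMod p) + kzN v J (p - 1)) + (kzN v J (2 * p) + kzN v J (2 * p - 1))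
      = 0 := by
  have hp := (Fact.out : p.Prime).two_le
  have hp3 : 3 ≤ p := by omega
  have h : ∑ I ∈ J.powersetCard (3 * p - 3), ((kzN v I 0 : ZMod p) - 
      ((kzN v I p : ZMod p) + kzN v I (p - 1)) + (kzN v I (2 * p) + kzN v I (2 * p - 1))) = 0 := by
    refine sum_eq_zero fun I hI => ?_
    rw [mem_powersetCard] at hI
    have := kz_sum' hp2 v I z (fun h => hz (hI.1 h)) hvz (by omega) (by omega)
    rw [kz_big v I (3 * p) (by omega), kz_big v I (3 * p - 1) (by omega)] at this
    rw [kz_zero]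
    simpa using this
  simp only [sum_add_distrib, sum_sub_distrib, ← Nat.cast_sum] at h
  have e : ∀ k c, k ≤ 3 * p - 3 → c * p + k ≤ 4 * p - 3 → 4 * p - 3 < (c + 1) * p + k →
      ((∑ I ∈ J.powersetCard (3 * p - 3), kzN v I k : ℕ) : ZMod p) = c * kzN v J k := by
    intro k c h1 h2 h3
    rw [kz_double v J _ k h1, hJ]
    have : (4 * p - 3 - k).choose (3 * p - 3 - k) = (4 * p - 3 - k).choose p := by
      apply Nat.choose_symm_of_eq_add
      omega
    rw [this, Nat.cast_mul, kz_choose (p := p) (4 * p - 3 - k) c (by omega) (by omega)]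
  rw [e 0 3 (by omega) (by omega) (by omega), e p 2 (by omega) (by omega) (by omega),
    e (p-1) 2 (by omega) (by omega) (by omega), e (2*p) 1 (by omega) (by omega) (by omega),
    e (2*p-1) 1 (by omega) (by omega) (by omega), kz_zero] at h
  rw [← h]
  push_cast
  ring

lemma kz_pos {v : ι → ZMod p × ZMod p} {J T : Finset ι} {k : ℕ} (h : kzN v J k = 0)
    (hT : T ⊆ J) (hk : #T = k) : ∑ i ∈ T, v i ≠ 0 := by
  intro h0
  unfold kzN at h
  rw [card_eq_zero, filter_eq_empty_iff] at h
  exact h (mem_powersetCard.2 ⟨hT, hk⟩) h0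

lemma kz_mono {v : ι → ZMod p × ZMod p} {J I : Finset ι} {k : ℕ} (h : kzN v J k = 0)
    (hI : I ⊆ J) : kzN v I k = 0 := by
  unfold kzN
  rw [card_eq_zero, filter_eq_empty_iff]
  intro T hT
  rw [mem_powersetCard] at hT
  exact kz_pos h (hT.1.trans hI) hT.2

/-- Alon-Dubiner -/
lemma kz_triple (hp2 : p ≠ 2) (v : ι → ZMod p × ZMod p) (J : Finset ι) (h : kzN v J p = 0) :
    kzN v J (3 * p) = 0 := by
  have hp := (Fact.out : p.Prime).two_le
  have hp1 : (1 : ZMod p) ≠ 0 := one_ne_zero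
  by_contra hne
  unfold kzN at hne
  rw [card_eq_zero, ← ne_eq, ← nonempty_iff_ne_empty] at hne
  obtain ⟨X, hX⟩ := hne
  simp only [mem_filter, mem_powersetCard] at hX
  obtain ⟨⟨hXJ, hXc⟩, hX0⟩ := hX
  obtain ⟨x, hx⟩ : X.Nonempty := card_pos.1 (by omega)
  have hc := card_erase_of_mem hx
  have hs := kz_sum hp2 v (X.erase x) (by omega) (by omega)
  rw [kz_mono h ((erase_subset _ _).trans hXJ), kz_big v _ (3 * p) (by omega)] at hs
  have : kzN v (X.erase x) (2 * p) ≠ 0 := by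
    intro h0; rw [h0] at hs; simp at hs
  unfold kzN at this
  rw [card_ne_zero] at this
  obtain ⟨Y, hY⟩ := this
  simp only [mem_filter, mem_powersetCard] at hY
  obtain ⟨⟨hYX, hYc⟩, hY0⟩ := hY
  have hYX' := hYX.trans (erase_subset _ _)
  refine kz_pos h (T := X \ Y) (sdiff_subset.trans hXJ) ?_ ?_
  · rw [card_sdiff_of_subset hYX']; omega
  · have := sum_sdiff hYX' (f := v)
    rwa [hX0, hY0, add_zero] at this

lemma kz_swap (hp2 : p ≠ 2) (v : ι → ZMod p × ZMod p) (J : Finset ι) (hJ : #J = 4 * p - 3)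
    (h : kzN v J p = 0) : (kzN v J (p - 1) : ZMod p) = kzN v J (3 * p - 1) := by
  have hp := (Fact.out : p.Prime).two_le
  have val : ∀ I ⊆ J, 3 * p - 2 ≤ #I → #I < 3 * p → (kzN v I (2 * p) : ZMod p) = -1 := by
    intro I hI h1 h2
    have hs := kz_sum hp2 v I h1 (by omega)
    rw [kz_mono h hI, kz_big v I (3 * p) h2] at hs
    simp only [Nat.cast_zero, sub_zero] at hs
    linear_combination hs
  set P := {T ∈ J.powersetCard (p - 1) | ∑ i ∈ T, v i = 0} with hP
  set Q := {T ∈ J.powersetCard (3 * p - 1) | ∑ i ∈ T, v i = 0} with hQ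
  have h2 := sum_card_bipartiteAbove_eq_sum_card_bipartiteBelow (s := P) (t := Q)
    (fun A X => A ⊆ X)
  unfold bipartiteAbove bipartiteBelow at h2
  have hA : ∀ A ∈ P, #{X ∈ Q | A ⊆ X} = kzN v (J \ A) (2 * p) := by
    intro A hA
    simp only [hP, mem_filter, mem_powersetCard] at hA
    refine card_bij' (fun X _ => X \ A) (fun C _ => C ∪ A) ?_ ?_ ?_ ?_
    · intro X hX
      simp only [hQ, mem_filter, mem_powersetCard] at hX ⊢
      refine ⟨⟨sdiff_subset_sdiff hX.1.1.1 le_rfl, ?_⟩, ?_⟩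
      · rw [card_sdiff_of_subset hX.2]; omega
      · have := sum_sdiff hX.2 (f := v)
        rwa [hX.1.2, hA.2, add_zero] at this
    · intro C hC
      simp only [hQ, mem_filter, mem_powersetCard] at hC ⊢
      have hd : Disjoint C A := disjoint_sdiff_self_left.mono_left hC.1.1
      refine ⟨⟨⟨union_subset (hC.1.1.trans sdiff_subset) hA.1.1, ?_⟩, ?_⟩, subset_union_right⟩
      · rw [card_union_of_disjoint hd]; omega
      · rw [sum_union hd, hC.2, hA.2, add_zero]
    · intro X hX
      simp only [mem_filter] at hX
      exact sdiff_union_of_subset hX.2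
    · intro C hC
      simp only [mem_filter, mem_powersetCard] at hC
      have hd : Disjoint C A := disjoint_sdiff_self_left.mono_left hC.1.1
      exact union_sdiff_cancel_right hd
  have hB : ∀ X ∈ Q, #{A ∈ P | A ⊆ X} = kzN v X (2 * p) := by
    intro X hX
    simp only [hQ, mem_filter, mem_powersetCard] at hX
    refine card_bij' (fun A _ => X \ A) (fun C _ => X \ C) ?_ ?_ ?_ ?_
    · intro A hA
      simp only [hP, mem_filter, mem_powersetCard] at hA ⊢
      refine ⟨⟨sdiff_subset, ?_⟩, ?_⟩
      · rw [card_sdiff_of_subset hA.2]; omega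
      · have := sum_sdiff hA.2 (f := v)
        rwa [hX.2, hA.1.2, add_zero] at this
    · intro C hC
      simp only [hP, mem_filter, mem_powersetCard] at hC ⊢
      refine ⟨⟨⟨sdiff_subset.trans hX.1.1, ?_⟩, ?_⟩, sdiff_subset⟩
      · rw [card_sdiff_of_subset hC.1.1]; omega
      · have := sum_sdiff hC.1.1 (f := v)
        rwa [hX.2, hC.2, add_zero] at this
    · intro A hA
      simp only [mem_filter] at hA
      exact Finset.sdiff_sdiff_eq_self hA.2
    · intro C hC
      simp only [mem_filter, mem_powersetCard] at hC
      exact Finset.sdiff_sdiff_eq_self hC.1.1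
  rw [sum_congr rfl hA, sum_congr rfl hB] at h2
  have h3 := congrArg (Nat.cast : ℕ → ZMod p) h2
  push_cast at h3
  rw [sum_congr rfl (g := fun _ => (-1 : ZMod p)), sum_congr (s₁ := Q) rfl
    (g := fun _ => (-1 : ZMod p))] at h3
  · simp only [sum_const, nsmul_eq_mul] at h3
    unfold kzN
    linear_combination -h3
  · intro X hX
    simp only [hQ, mem_filter, mem_powersetCard] at hX
    exact val X hX.1.1 (by omega) (by omega)
  · intro A hA
    simp only [hP, mem_filter, mem_powersetCard] at hA
    have := card_sdiff_of_subset hA.1.1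
    exact val _ sdiff_subset (by omega) (by omega)

lemma kz_main (hp2 : p ≠ 2) (v : ι → ZMod p × ZMod p) (J : Finset ι) (z : ι) (hz : z ∉ J)
    (hvz : v z = 0) (hJ : #J = 4 * p - 3) : kzN v J p ≠ 0 := by
  intro h
  have hp := (Fact.out : p.Prime).two_le
  have h1 := kz_sum hp2 v J (by omega) (by omega)
  have h2 := kz_sum' hp2 v J z hz hvz (by omega) (by omega)
  have h3 := kz_three hp2 v J z hz hvz hJ
  have h4 := kz_swap hp2 v J hJ h
  have h5 := kz_triple hp2 v J h
  rw [h, h5] at h1 h2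
  rw [h] at h3
  simp only [Nat.cast_zero] at h1 h2 h3
  have : ((2 : ℕ) : ZMod p) = 0 := by
    push_cast
    linear_combination h3 - h2 + h4
  rw [CharP.cast_eq_zero_iff (ZMod p) p] at this
  have := Nat.le_of_dvd (by norm_num) this
  omega

end

theorem kemnitz_prime {ι : Type*} {p : ℕ} [Fact p.Prime] (v : ι → ZMod p × ZMod p) (J : Finset ι)
    (hJ : 4 * p - 3 ≤ #J) : ∃ T ⊆ J, #T = p ∧ ∑ i ∈ T, v i = 0 := by
  classical
  obtain ⟨K, hKJ, hK⟩ := exists_subset_card_eq hJ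
  by_cases hp2 : p = 2
  · subst hp2
    obtain ⟨x, hx, y, hy, hxy, he⟩ := exists_ne_map_eq_of_card_lt_of_maps_to (s := K)
      (t := (univ : Finset (ZMod 2 × ZMod 2))) (f := v) (by
        rw [hK, card_univ]; decide) (fun _ _ => mem_univ _)
    refine ⟨{x, y}, (insert_subset hx (singleton_subset_iff.2 hy)).trans hKJ, card_pair hxy, ?_⟩
    rw [sum_pair hxy, he]
    exact Prod.ext (CharTwo.add_self_eq_zero _) (CharTwo.add_self_eq_zero _)
  · have h := kz_main hp2 (fun o : Option ι => o.elim 0 v) (K.map Function.Embedding.some) none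
      (by simp) rfl (by simpa using hK)
    unfold kzN at h
    rw [card_ne_zero] at h
    obtain ⟨T, hT⟩ := h
    simp only [mem_filter, mem_powersetCard] at hT
    obtain ⟨⟨h1, h2⟩, h3⟩ := hT
    obtain ⟨U, hU, rfl⟩ := subset_map_iff.1 h1
    exact ⟨U, hU.trans hKJ, by simpa using h2, by simpa using h3⟩

end Kemnitz

/-- First coordinate of the product of a list of pairs in `ℤ ⋊ ℕ`. -/
def bval (r : ℤ) : List (ℤ × ℕ) → ℤ
  | [] => 0
  | x :: l => x.1 + r ^ x.2 * bval r l

/-- Second coordinate of the product. -/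
def bsum (l : List (ℤ × ℕ)) : ℕ := (l.map Prod.snd).sum

lemma bsum_append (l l' : List (ℤ × ℕ)) : bsum (l ++ l') = bsum l + bsum l' := by
  simp [bsum]

lemma bval_append (r : ℤ) (l l' : List (ℤ × ℕ)) :
    bval r (l ++ l') = bval r l + r ^ bsum l * bval r l' := by
  induction l with
  | nil => simp [bval, bsum]
  | cons x l ih =>
    simp only [List.cons_append, bval, ih, bsum, List.map_cons, List.sum_cons, pow_add]
    ring

lemma bval_modEq (r : ℤ) (p : ℕ) (hr : (p : ℤ) ∣ r - 1) (l : List (ℤ × ℕ)) :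
    ((bval r l : ℤ) : ZMod p) = (l.map fun x => ((x.1 : ℤ) : ZMod p)).sum := by
  have hr1 : (r : ZMod p) = 1 := by
    have := (ZMod.intCast_zmod_eq_zero_iff_dvd _ p).2 hr
    push_cast at this
    linear_combination this
  induction l with
  | nil => simp [bval]
  | cons x l ih => simp [bval, ih, hr1]

lemma list_le_map {α β : Type*} [DecidableEq α] [DecidableEq β] (f : α → β) (l' : List β) :
    ∀ B : Multiset α, (l' : Multiset β) ≤ B.map f →
      ∃ L : List α, (L : Multiset α) ≤ B ∧ L.map f = l' := by
  induction l' with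
  | nil => intro B _; exact ⟨[], by simp, rfl⟩
  | cons x l' ih =>
    intro B h
    have hx : x ∈ B.map f := Multiset.mem_of_le h (by simp)
    obtain ⟨b, hb, rfl⟩ := Multiset.mem_map.1 hx
    obtain ⟨C, rfl⟩ := Multiset.exists_cons_of_mem hb
    rw [← Multiset.cons_coe, Multiset.map_cons, Multiset.cons_le_cons_iff] at h
    obtain ⟨L, hL, rfl⟩ := ih C h
    refine ⟨b :: L, ?_, rfl⟩
    rw [← Multiset.cons_coe, Multiset.cons_le_cons_iff]
    exact hL

lemma exists_blocks {α : Type*} [DecidableEq α] (Q : List α → Prop) (p c : ℕ)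
    (h : ∀ S : Multiset α, c ≤ Multiset.card S → ∃ l : List α, (l : Multiset α) ≤ S ∧
      l.length = p ∧ Q l) (k : ℕ) :
    ∀ S : Multiset α, c + k * p ≤ Multiset.card S + p → ∃ B : Multiset (List α),
      Multiset.card B = k ∧ (∀ l ∈ B, l.length = p ∧ Q l) ∧
      (B.map (fun l : List α => (l : Multiset α))).sum ≤ S := by
  induction k with
  | zero => intro S _; exact ⟨0, by simp⟩
  | succ k ih =>
    intro S hS
    have e : (k + 1) * p = k * p + p := by ring
    obtain ⟨l, hl, hlp, hQ⟩ := h S (by omega)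
    have hc := Multiset.card_sub hl
    rw [Multiset.coe_card] at hc
    obtain ⟨B, hB, hB', hBs⟩ := ih (S - l) (by omega)
    refine ⟨l ::ₘ B, by simp [hB], ?_, ?_⟩
    · intro l' hl'
      rcases Multiset.mem_cons.1 hl' with rfl | h'
      · exact ⟨hlp, hQ⟩
      · exact hB' _ h'
    · rw [Multiset.map_cons, Multiset.sum_cons]
      calc _ ≤ (l : Multiset α) + (S - l) := by gcongr
        _ = S := add_tsub_cancel_of_le hl

lemma flatten_facts (r : ℤ) (p : ℕ) (hp : 0 < p) (L : List (List (ℤ × ℕ)))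
    (h : ∀ l ∈ L, (p : ℤ) ∣ bval r l ∧ p ∣ bsum l) :
    bval r L.flatten = p * bval (r ^ p) (L.map fun l => (bval r l / p, bsum l / p)) ∧
    bsum L.flatten = p * bsum (L.map fun l => (bval r l / p, bsum l / p)) := by
  induction L with
  | nil => simp [bval, bsum]
  | cons l L ih =>
    obtain ⟨⟨a, ha⟩, ⟨b, hb⟩⟩ := h l (by simp)
    obtain ⟨h1, h2⟩ := ih fun l' hl' => h l' (by simp [hl'])
    rw [List.flatten_cons, bval_append, bsum_append, h1, h2, List.map_cons]
    have hp' : (p : ℤ) ≠ 0 := by positivity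
    have e1 : bval r l / p = a := by rw [ha, Int.mul_ediv_cancel_left _ hp']
    have e2 : bsum l / p = b := by rw [hb, Nat.mul_div_cancel_left _ hp]
    constructor
    · rw [bval, e1, e2, ha, hb, pow_mul]; ring
    · conv_rhs => rw [bsum, List.map_cons, List.sum_cons, ← bsum, e2]
      rw [hb]; ring

lemma coe_flatten {α : Type*} (L : List (List α)) :
    ((L.flatten : List α) : Multiset α) = ((L : Multiset (List α)).map (fun l : List α => (l : Multiset α))).sum := by
  induction L with
  | nil => simp
  | cons l L ih =>
    rw [List.flatten_cons, ← Multiset.coe_add, ih, ← Multiset.cons_coe, Multiset.map_cons,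
      Multiset.sum_cons]

lemma kemnitz_list (r : ℤ) (p : ℕ) (hp : p.Prime) (hr : (p : ℤ) ∣ r - 1) (S : Multiset (ℤ × ℕ))
    (hS : 4 * p - 3 ≤ Multiset.card S) : ∃ l : List (ℤ × ℕ), (l : Multiset (ℤ × ℕ)) ≤ S ∧
      l.length = p ∧ ((p : ℤ) ∣ bval r l ∧ p ∣ bsum l) := by
  have : Fact p.Prime := ⟨hp⟩
  obtain ⟨T, hT, hTc, hT0⟩ := kemnitz_prime (p := p)
    (fun i : (ℤ × ℕ) × ℕ => ((i.1.1 : ZMod p), (i.1.2 : ZMod p))) S.toEnumFinset (by simpa using hS)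
  have hle := Multiset.map_fst_le_of_subset_toEnumFinset hT
  refine ⟨(T.1.map Prod.fst).toList, by rw [Multiset.coe_toList]; exact hle, by simpa using hTc,
    ?_, ?_⟩
  · rw [← ZMod.intCast_zmod_eq_zero_iff_dvd, bval_modEq r p hr, ← Multiset.sum_coe,
      ← Multiset.map_coe, Multiset.coe_toList, Multiset.map_map]
    have := congrArg Prod.fst hT0
    rw [Prod.fst_sum] at this
    exact this
  · rw [← CharP.cast_eq_zero_iff (ZMod p), bsum, ← Multiset.sum_coe,
      ← Multiset.map_coe, Multiset.coe_toList, Multiset.map_map]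
    have := congrArg Prod.snd hT0
    rw [Prod.snd_sum] at this
    rw [Nat.cast_multiset_sum, Multiset.map_map]
    exact this

lemma minFac_dvd (m : ℕ) (hm : 1 < m) (r : ℤ) (h : (m.minFac : ℤ) ∣ r ^ m - 1) :
    (m.minFac : ℤ) ∣ r - 1 := by
  have hp : m.minFac.Prime := Nat.minFac_prime (by omega)
  have : Fact m.minFac.Prime := ⟨hp⟩
  rw [← ZMod.intCast_zmod_eq_zero_iff_dvd] at h ⊢
  push_cast at h ⊢
  have h1 : (r : ZMod m.minFac) ^ m = 1 := sub_eq_zero.1 h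
  have h0 : (r : ZMod m.minFac) ≠ 0 := by
    intro h0
    rw [h0, zero_pow (by omega)] at h1
    exact zero_ne_one h1
  have h2 : (r : ZMod m.minFac) ^ (m.minFac - 1) = 1 := ZMod.pow_card_sub_one_eq_one h0
  have hc : Nat.gcd m (m.minFac - 1) = 1 := by
    apply Nat.coprime_of_dvd
    intro q hq hqm hqp
    have h3 := Nat.minFac_le_of_dvd hq.two_le hqm
    have h4 := Nat.le_of_dvd (by have := hp.two_le; omega) hqp
    have := hp.two_le
    omega
  have h3 := pow_gcd_eq_one.2 ⟨h1, h2⟩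
  rw [hc, pow_one] at h3
  rw [h3, sub_self]

lemma main_list (m : ℕ) : ∀ (n : ℕ) (r : ℤ), 0 < m → 0 < n → ((m * n : ℕ) : ℤ) ∣ r ^ m - 1 →
    ∀ S : Multiset (ℤ × ℕ), 2 * m + 2 * (m * n) - 3 ≤ Multiset.card S →
    ∃ l : List (ℤ × ℕ), (l : Multiset (ℤ × ℕ)) ≤ S ∧ l.length = m * n ∧
      ((m * n : ℕ) : ℤ) ∣ bval r l ∧ m ∣ bsum l := by
  induction m using Nat.strong_induction_on with
  | _ m ih =>
  intro n r hm hn hr S hS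
  rcases Nat.lt_or_ge 1 m with h1 | h1
  · have hp : m.minFac.Prime := Nat.minFac_prime (by omega)
    obtain ⟨k, hk⟩ := Nat.minFac_dvd m
    have hrp : (m.minFac : ℤ) ∣ r - 1 := by
      apply minFac_dvd m h1
      refine dvd_trans ?_ hr
      exact_mod_cast (Nat.minFac_dvd m).trans (dvd_mul_right _ _)
    set p := m.minFac with hpdef
    clear_value p
    have hk0 : 0 < k := by
      rcases Nat.eq_zero_or_pos k with rfl | h
      · omega
      · exact h
    have hkm : k < m := by
      rw [hk]; nlinarith [hp.two_le]
    have hkn : 0 < k * n := Nat.mul_pos hk0 hn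
    obtain ⟨B, hBc, hB, hBs⟩ := exists_blocks _ p (4 * p - 3)
      (fun S hS => kemnitz_list r p hp hrp S hS) (2 * k + 2 * (k * n) - 3) S (by
        obtain ⟨w, hw⟩ : ∃ w, 2 * k + 2 * (k * n) = w + 3 + 1 := ⟨2 * k + 2 * (k * n) - 4, by omega⟩
        have e : 2 * m + 2 * (m * n) = (w + 3 + 1) * p := by
          rw [← hw, hk]; ring
        rw [hw]
        rw [e] at hS
        have : (w + 3 + 1 - 3) * p = w * p + p := by
          rw [show w + 3 + 1 - 3 = w + 1 by omega]; ring
        have e2 : (w + 3 + 1) * p = w * p + 4 * p := by ring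
        have := hp.two_le
        omega)
    obtain ⟨l', hl', hl'c, hl'1, hl'2⟩ := ih k hkm n (r ^ p) hk0 hn (by
      rw [← pow_mul, ← hk]
      refine dvd_trans ?_ hr
      rw [hk]
      exact Int.natCast_dvd_natCast.2 ⟨p, by ring⟩)
      (B.map fun l => (bval r l / p, bsum l / p)) (by rw [Multiset.card_map, hBc])
    obtain ⟨L, hL, rfl⟩ := list_le_map _ l' B hl'
    have hL' : ∀ l ∈ L, l.length = p ∧ ((p : ℤ) ∣ bval r l ∧ p ∣ bsum l) := fun l hl =>
      hB l (Multiset.mem_of_le hL (by simpa using hl))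
    obtain ⟨f1, f2⟩ := flatten_facts r p hp.pos L fun l hl => (hL' l hl).2
    refine ⟨L.flatten, ?_, ?_, ?_, ?_⟩
    · rw [coe_flatten]
      refine le_trans ?_ hBs
      obtain ⟨C, rfl⟩ := Multiset.le_iff_exists_add.1 hL
      rw [Multiset.map_add, Multiset.sum_add]
      exact Multiset.le_add_right _ _
    · rw [List.length_flatten, List.map_congr_left (g := fun _ => p) fun l hl => (hL' l hl).1]
      rw [List.length_map] at hl'c
      rw [List.map_const', List.sum_replicate, hl'c, hk, smul_eq_mul]; ring
    · rw [f1, hk, mul_assoc, Nat.cast_mul]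
      exact mul_dvd_mul_left _ hl'1
    · rw [f2, hk]
      exact mul_dvd_mul_left _ hl'2
  · obtain rfl : m = 1 := by omega
    simp only [one_mul, pow_one, mul_one] at hr hS ⊢
    obtain ⟨T, hT, hTc, hT0⟩ := ZMod.erdos_ginzburg_ziv (n := n) (s := S.toEnumFinset)
      (fun i : (ℤ × ℕ) × ℕ => ((i.1.1 : ℤ) : ZMod n)) (by simp; omega)
    have hle := Multiset.map_fst_le_of_subset_toEnumFinset hT
    refine ⟨(T.1.map Prod.fst).toList, by rw [Multiset.coe_toList]; exact hle, by simpa using hTc,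
      ?_, one_dvd _⟩
    rw [← ZMod.intCast_zmod_eq_zero_iff_dvd, bval_modEq r n hr, ← Multiset.sum_coe,
      ← Multiset.map_coe, Multiset.coe_toList, Multiset.map_map]
    exact hT0

/-- Every sequence of length `2m + 2mn − 3` over `C_m ⋉_φ C_{mn}` contains a
product-one subsequence of length exactly `mn`. -/
theorem product_one_subseq_eq_mn (m n : ℕ) (hm : 0 < m) (hn : 0 < n)
    (φ : Multiplicative (ZMod m) →* MulAut (Multiplicative (ZMod (m * n))))
    (S : Multiset (Multiplicative (ZMod (m * n)) ⋊[φ] Multiplicative (ZMod m)))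
    (hS : Multiset.card S = 2 * m + 2 * (m * n) - 3) :
    ∃ T ≤ S, Multiset.card T = m * n ∧ IsProductOne T := by
  classical
  have : NeZero m := ⟨by omega⟩
  have : NeZero (m * n) := ⟨by positivity⟩
  -- the multiplier
  set g : ZMod m → ZMod (m * n) → ZMod (m * n) := fun b a =>
    Multiplicative.toAdd (φ (Multiplicative.ofAdd b) (Multiplicative.ofAdd a)) with hg
  have gadd : ∀ b a a', g b (a + a') = g b a + g b a' := by
    intro b a a'
    simp [hg, ofAdd_add, map_mul, toAdd_mul]
  have gcomp : ∀ b b' a, g (b + b') a = g b (g b' a) := by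
    intro b b' a
    simp [hg, ofAdd_add, map_mul]
  have g0 : ∀ a, g 0 a = a := by
    intro a
    simp [hg]
  have glin : ∀ b a, g b a = a * g b 1 := by
    intro b a
    let G : ZMod (m * n) →+ ZMod (m * n) :=
      { toFun := g b, map_zero' := by simp [hg], map_add' := gadd b }
    have h1 : G ((a.val : ℕ) • 1) = a.val • G 1 := map_nsmul _ _ _
    rw [nsmul_eq_mul, mul_one, nsmul_eq_mul, ZMod.natCast_zmod_val] at h1
    exact h1
  set ρ : ZMod (m * n) := g 1 1 with hρ
  have gpow : ∀ (b : ℕ) (a : ZMod (m * n)), g b a = ρ ^ b * a := by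
    intro b
    induction b with
    | zero => intro a; simp [g0]
    | succ b ih =>
      intro a
      rw [Nat.cast_succ, gcomp, ih, glin 1 a, pow_succ]; ring
  have hρm : ρ ^ m = 1 := by
    have := gpow m 1
    rw [ZMod.natCast_self, g0, mul_one] at this
    exact this.symm
  set r : ℤ := (ρ.val : ℤ) with hr
  have hrρ : ((r : ℤ) : ZMod (m * n)) = ρ := by
    rw [hr, Int.cast_natCast, ZMod.natCast_zmod_val]
  let f : (Multiplicative (ZMod (m * n)) ⋊[φ] Multiplicative (ZMod m)) → ℤ × ℕ := fun x =>
    (((Multiplicative.toAdd x.left).val : ℤ), (Multiplicative.toAdd x.right).val)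
  have hprod : ∀ L : List (Multiplicative (ZMod (m * n)) ⋊[φ] Multiplicative (ZMod m)),
      Multiplicative.toAdd L.prod.left = ((bval r (L.map f) : ℤ) : ZMod (m * n)) ∧
      Multiplicative.toAdd L.prod.right = ((bsum (L.map f) : ℕ) : ZMod m) := by
    intro L
    induction L with
    | nil => simp [bval, bsum]
    | cons x L ih =>
      obtain ⟨h1, h2⟩ := ih
      have hx1 : (((f x).1 : ℤ) : ZMod (m * n)) = Multiplicative.toAdd x.left := by
        simp [f]
      have hx2 : (((f x).2 : ℕ) : ZMod m) = Multiplicative.toAdd x.right := by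
        simp [f]
      constructor
      · rw [List.prod_cons, SemidirectProduct.mul_left, toAdd_mul, List.map_cons, bval]
        push_cast
        rw [hx1, ← h1, hrρ, ← gpow, hx2]
        rfl
      · rw [List.prod_cons, SemidirectProduct.mul_right, toAdd_mul, List.map_cons, bsum,
          List.map_cons, List.sum_cons, ← bsum, Nat.cast_add, hx2, h2]
  obtain ⟨l, hl, hlc, hl1, hl2⟩ := main_list m n r hm hn (by
    rw [← ZMod.intCast_zmod_eq_zero_iff_dvd]
    push_cast
    rw [hrρ, hρm, sub_self]) (S.map f) (by rw [Multiset.card_map, hS])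
  obtain ⟨L, hL, rfl⟩ := list_le_map f l S hl
  refine ⟨L, hL, by simpa using hlc, L, rfl, ?_⟩
  obtain ⟨h1, h2⟩ := hprod L
  rw [(ZMod.intCast_zmod_eq_zero_iff_dvd _ _).2 hl1] at h1
  rw [(CharP.cast_eq_zero_iff (ZMod m) m _).2 hl2] at h2
  exact SemidirectProduct.ext h1 h2
end
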